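/- arXiv:2410.02354 — 13 statements merged into one kernel-verified Lean document; each statement's English description precedes it below -/
import Mathlib

section
/- Conservation of velocity (Lemma 3 / 'Lemma-VH' of the paper). Let H, Λ, ω and Q₁, Q₂, Q₃ be elements of A with H = Λ·ω, [Λ, ω] = 0, and [Q_i, Λ] = 0 for each i, and define the velocity components V_i := (1/(iℏ))·[Q_i, H]. If [V_i, ω] = 0 for each i, then the velocity is conserved: [V_i, H] = 0 for each i. -/
/-- Conservation of velocity (Lemma 'Lemma-VH').
`A` is a unital associative algebra over `ℂ`, `⁅a,b⁆ = a*b - b*a`.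
Given `H = Λ * ω`, `[Λ, ω] = 0`, `[Q i, Λ] = 0`, and the velocity
`V i = (1/(iℏ)) • [Q i, H]`, if `[V i, ω] = 0` for each `i` then
`[V i, H] = 0` for each `i`. -/
theorem velocity_is_conserved
    {A : Type*} [Ring A] [Algebra ℂ A] (ℏ : ℝ) (hℏ : ℏ ≠ 0)
    (H Λ ω : A) (Q V : Fin 3 → A)
    (hH : H = Λ * ω)
    (hΛω : ⁅Λ, ω⁆ = 0)
    (hQΛ : ∀ i, ⁅Q i, Λ⁆ = 0)
    (hV : ∀ i, V i = (Complex.I * (ℏ : ℂ))⁻¹ • ⁅Q i, H⁆)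
    (hVω : ∀ i, ⁅V i, ω⁆ = 0) :
    ∀ i, ⁅V i, H⁆ = 0 := by
  intro i
  have h1 : Commute Λ ω := commute_iff_lie_eq.mpr hΛω
  have h2 : Commute (Q i) Λ := commute_iff_lie_eq.mpr (hQΛ i)
  have h3 : Commute (V i) ω := commute_iff_lie_eq.mpr (hVω i)
  have h4 : Commute H Λ := by
    rw [hH]
    exact (Commute.refl Λ).mul_left h1.symm
  have h5 : Commute (V i) Λ := by
    rw [hV i, Ring.lie_def]
    exact ((h2.mul_left h4).sub_left (h4.mul_left h2)).smul_left _
  rw [← commute_iff_lie_eq, hH]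
  exact h5.mul_right h3
end

section
/- Form of the velocity operator (Lemma 4 / 'Lemma-V' of the paper). Fix a real number t. Let H be invertible in A with inverse H⁻¹, and let Q_i, P_i (i = 1,2,3) satisfy [P_i, H] = 0. Define V_i := (1/(iℏ))·[Q_i, H] and M_i := t·P_i − (1/2)(Q_iH + HQ_i). If [V_i, H] = 0 and [M_i, H] = −iℏ·P_i for each i, then V_i = P_i·H⁻¹ for each i. -/
/-- Form of the velocity operator (Lemma 'Lemma-V').
If `H` is invertible, `[P i, H] = 0`, `V i = (1/(iℏ)) • [Q i, H]`,
`M i = t • P i - (1/2)(Q i * H + H * Q i)`, `[V i, H] = 0` and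
`[M i, H] = -iℏ • P i`, then `V i = P i * H⁻¹`. -/
theorem velocity_standard_form
    {A : Type*} [Ring A] [Algebra ℂ A] (ℏ : ℝ) (hℏ : ℏ ≠ 0) (t : ℝ)
    (H Hinv : A) (Q P V M : Fin 3 → A)
    (hHinv1 : H * Hinv = 1) (hHinv2 : Hinv * H = 1)
    (hPH : ∀ i, ⁅P i, H⁆ = 0)
    (hV : ∀ i, V i = (Complex.I * (ℏ : ℂ))⁻¹ • ⁅Q i, H⁆)
    (hM : ∀ i, M i = (t : ℂ) • P i - (2 : ℂ)⁻¹ • (Q i * H + H * Q i))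
    (hVH : ∀ i, ⁅V i, H⁆ = 0)
    (hMH : ∀ i, ⁅M i, H⁆ = -((Complex.I * (ℏ : ℂ)) • P i)) :
    ∀ i, V i = P i * Hinv := by
  intro i
  have hc : Complex.I * (ℏ : ℂ) ≠ 0 :=
    mul_ne_zero Complex.I_ne_zero (Complex.ofReal_ne_zero.mpr hℏ)
  have hQ : Q i * H - H * Q i = (Complex.I * (ℏ : ℂ)) • V i := by
    rw [hV i, smul_smul, mul_inv_cancel₀ hc, one_smul, Ring.lie_def]
  have hP : P i * H = H * P i := by
    have h := hPH i
    rwa [Ring.lie_def, sub_eq_zero] at h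
  have hVc : V i * H = H * V i := by
    have h := hVH i
    rwa [Ring.lie_def, sub_eq_zero] at h
  generalize Complex.I * (ℏ : ℂ) = c at *
  have key : ⁅M i, H⁆ = -(c • (V i * H)) := by
    have h1 : ⁅M i, H⁆ = (t : ℂ) • (P i * H - H * P i)
        - (2 : ℂ)⁻¹ • ((Q i * H - H * Q i) * H + H * (Q i * H - H * Q i)) := by
      rw [hM i, Ring.lie_def]
      simp only [sub_mul, mul_sub, add_mul, mul_add, smul_mul_assoc, mul_smul_comm,
        smul_sub, smul_add, mul_assoc]
      abel
    rw [h1, hP, sub_self, smul_zero, zero_sub, hQ, smul_mul_assoc, mul_smul_comm, ← hVc,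
      ← two_smul ℂ, smul_smul, inv_mul_cancel₀ two_ne_zero, one_smul]
  have h2 : V i * H = P i := by
    have h := key.symm.trans (hMH i)
    exact smul_right_injective A hc (neg_injective h)
  rw [← h2, mul_assoc, hHinv1, mul_one]
end

section
/- Commutativity of position components (Lemma 5 / 'Lemma-XX' of the paper). Fix a real number t. Let H be invertible in A with inverse H⁻¹, and let Q_i, P_i (i = 1,2,3) satisfy [Q_i, P_j] = iℏ·δ_{ij}, [P_i, P_j] = 0, [P_i, H] = 0, and [Q_i, H] = iℏ·P_i·H⁻¹. Define L_k := ε_{klm}Q_lP_m and M_i := t·P_i − (1/2)(Q_iH + HQ_i). If the boost generators satisfy [M_i, M_j] = −iℏ·ε_{ijk}L_k for all i, j, then the position components commute among themselves: [Q_i, Q_j] = 0 for all i, j. -/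
/-- The Levi-Civita symbol on `Fin 3`, valued in `ℂ`. -/
noncomputable def eps (i j k : Fin 3) : ℂ :=
  ((j.val : ℂ) - (i.val : ℂ)) * ((k.val : ℂ) - (j.val : ℂ)) * ((k.val : ℂ) - (i.val : ℂ)) / 2

/-- The Kronecker delta on `Fin 3`, valued in `ℂ`. -/
noncomputable def kdelta (i j : Fin 3) : ℂ := if i = j then 1 else 0

/-- Commutativity of position components (Lemma 'Lemma-XX').
Given the Heisenberg relations between `Q` and `P`, conservation of momentum,
`[Q i, H] = iℏ • (P i * H⁻¹)`, `L k = ε_{klm} Q l * P m`,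
`M i = t • P i - (1/2)(Q i H + H Q i)`, and `[M i, M j] = -iℏ ε_{ijk} • L k`,
the position components commute: `[Q i, Q j] = 0`. -/
theorem position_components_commute
    {A : Type*} [Ring A] [Algebra ℂ A] (ℏ : ℝ) (hℏ : ℏ ≠ 0) (t : ℝ)
    (H Hinv : A) (Q P L M : Fin 3 → A)
    (hHinv1 : H * Hinv = 1) (hHinv2 : Hinv * H = 1)
    (hQP : ∀ i j, ⁅Q i, P j⁆ = (Complex.I * (ℏ : ℂ) * kdelta i j) • (1 : A))
    (hPP : ∀ i j, ⁅P i, P j⁆ = 0)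
    (hPH : ∀ i, ⁅P i, H⁆ = 0)
    (hQH : ∀ i, ⁅Q i, H⁆ = (Complex.I * (ℏ : ℂ)) • (P i * Hinv))
    (hL : ∀ k, L k = ∑ l, ∑ m, eps k l m • (Q l * P m))
    (hM : ∀ i, M i = (t : ℂ) • P i - (2 : ℂ)⁻¹ • (Q i * H + H * Q i))
    (hMM : ∀ i j, ⁅M i, M j⁆ = -((Complex.I * (ℏ : ℂ)) • ∑ k, eps i j k • L k)) :
    ∀ i j, ⁅Q i, Q j⁆ = 0 := by
  intro i j
  set c : ℂ := Complex.I * (ℏ : ℂ) with hc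
  have hR : ∑ k, eps i j k • L k = Q i * P j - Q j * P i := by
    simp only [hL]
    fin_cases i <;> fin_cases j <;> simp [Fin.sum_univ_three, eps] <;> norm_num <;> abel
  have hd : ∀ a b, kdelta a b = kdelta b a := by
    intro a b
    simp [kdelta, eq_comm]
  have lskew : ∀ x y : A, -⁅y, x⁆ = ⁅x, y⁆ := fun x y => by
    simp only [Ring.lie_def, neg_sub]
  have al : ∀ x y z : A, ⁅x + y, z⁆ = ⁅x, z⁆ + ⁅y, z⁆ := fun x y z => by
    simp only [Ring.lie_def]; noncomm_ring
  have la : ∀ x y z : A, ⁅x, y + z⁆ = ⁅x, y⁆ + ⁅x, z⁆ := fun x y z => by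
    simp only [Ring.lie_def]; noncomm_ring
  have sl : ∀ x y z : A, ⁅x - y, z⁆ = ⁅x, z⁆ - ⁅y, z⁆ := fun x y z => by
    simp only [Ring.lie_def]; noncomm_ring
  have ls : ∀ x y z : A, ⁅x, y - z⁆ = ⁅x, y⁆ - ⁅x, z⁆ := fun x y z => by
    simp only [Ring.lie_def]; noncomm_ring
  have PP : ∀ a b, P a * P b = P b * P a := fun a b => by
    have := hPP a b
    rwa [Ring.lie_def, sub_eq_zero] at this
  have PH : ∀ a, H * P a = P a * H := fun a => by
    have := hPH a
    rw [Ring.lie_def, sub_eq_zero] at this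
    exact this.symm
  have PV : ∀ a, Hinv * P a = P a * Hinv := fun a => by
    calc Hinv * P a = Hinv * P a * (H * Hinv) := by rw [hHinv1, mul_one]
      _ = Hinv * (P a * H) * Hinv := by simp only [mul_assoc]
      _ = Hinv * H * (P a * Hinv) := by rw [← PH]; simp only [mul_assoc]
      _ = P a * Hinv := by rw [hHinv2, one_mul]
  have HQ : ∀ a, H * Q a = Q a * H - c • (P a * Hinv) := fun a => by
    have := hQH a
    rw [Ring.lie_def] at this
    rw [← this]; abel
  have PQ : ∀ a b, P b * Q a = Q a * P b - (c * kdelta a b) • (1 : A) := fun a b => by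
    have := hQP a b
    rw [Ring.lie_def] at this
    rw [← this]; abel
  have VX : ∀ a, Hinv * (Q a * H) = Q a + c • (P a * (Hinv * Hinv)) := fun a => by
    have h1 : Q a * H = H * Q a + c • (P a * Hinv) := by rw [HQ]; abel
    rw [h1, mul_add, ← mul_assoc, hHinv2, one_mul, mul_smul_comm, ← mul_assoc, PV, mul_assoc]
  have hM' : ∀ a, M a = (t : ℂ) • P a - Q a * H + (2⁻¹ * c) • (P a * Hinv) := fun a => by
    rw [hM, HQ]
    module
  have XP : ∀ a b, ⁅Q a * H, P b⁆ = (c * kdelta a b) • H := fun a b => by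
    rw [Ring.lie_def, mul_assoc, PH, ← mul_assoc, ← mul_assoc, PQ, sub_mul, smul_mul_assoc, one_mul]
    abel
  have XY : ∀ a b, ⁅Q a * H, P b * Hinv⁆
      = (c * kdelta a b) • (1 : A) - c • (P b * P a * (Hinv * Hinv)) := fun a b => by
    have e1 : Q a * H * (P b * Hinv) = Q a * P b := by
      rw [mul_assoc, ← mul_assoc H, PH, mul_assoc (P b), hHinv1, mul_one]
    have e2 : P b * Hinv * (Q a * H) = P b * Q a + c • (P b * P a * (Hinv * Hinv)) := by
      rw [mul_assoc, VX, mul_add, mul_smul_comm, mul_assoc (P b) (P a)]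
    rw [Ring.lie_def, e1, e2, PQ]
    abel
  have XX' : ∀ a b, Q a * H * (Q b * H) = Q a * Q b * (H * H) - c • (Q a * P b) := fun a b => by
    rw [mul_assoc, ← mul_assoc H, HQ, sub_mul, smul_mul_assoc, mul_assoc (P b), hHinv2, mul_one,
      mul_sub, mul_smul_comm]
    simp only [mul_assoc]
  have XX : ⁅Q i * H, Q j * H⁆ = ⁅Q i, Q j⁆ * (H * H) - c • (Q i * P j - Q j * P i) := by
    rw [Ring.lie_def, XX', XX', Ring.lie_def, sub_mul, smul_sub]
    abel
  have PY : ∀ a b, ⁅P a, P b * Hinv⁆ = 0 := fun a b => by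
    rw [Ring.lie_def, mul_assoc (P b), PV, ← mul_assoc, ← mul_assoc, PP, sub_self]
  have YP : ∀ a b, ⁅P a * Hinv, P b⁆ = 0 := fun a b => by
    rw [← lskew, PY, neg_zero]
  have YY : ∀ a b, ⁅P a * Hinv, P b * Hinv⁆ = 0 := fun a b => by
    rw [Ring.lie_def, mul_assoc (P b), mul_assoc (P a), ← mul_assoc Hinv (P a),
      ← mul_assoc Hinv (P b), PV, PV, mul_assoc, mul_assoc, ← mul_assoc, ← mul_assoc (P b), PP,
      sub_self]
  have PX : ⁅P i, Q j * H⁆ = -((c * kdelta i j) • H) := by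
    rw [← lskew, XP, hd]
  have YX : ⁅P i * Hinv, Q j * H⁆
      = -((c * kdelta i j) • (1 : A) - c • (P j * P i * (Hinv * Hinv))) := by
    rw [← lskew, XY, hd, PP]
  have key := hMM i j
  rw [hR, hM', hM'] at key
  have key2 : ⁅Q i * H, Q j * H⁆ = -(c • (Q i * P j - Q j * P i)) := by
    rw [← key]
    have S : ∀ (z : ℂ) (x y : A), ⁅z • x, y⁆ = z • ⁅x, y⁆ := fun z x y => by
      simp only [Ring.lie_def, smul_mul_assoc, mul_smul_comm, smul_sub]
    have S' : ∀ (z : ℂ) (x y : A), ⁅x, z • y⁆ = z • ⁅x, y⁆ := fun z x y => by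
      simp only [Ring.lie_def, smul_mul_assoc, mul_smul_comm, smul_sub]
    simp only [al, sl, la, ls, S, S', PY, YP, YY, hPP, PX, YX, XP, XY]
    module
  rw [XX] at key2
  have key3 : ⁅Q i, Q j⁆ * (H * H) = 0 := by
    have := congrArg (· + c • (Q i * P j - Q j * P i)) key2
    simpa using this
  calc ⁅Q i, Q j⁆ = ⁅Q i, Q j⁆ * (H * H) * (Hinv * Hinv) := by
        rw [mul_assoc, mul_assoc H, ← mul_assoc H Hinv, hHinv1, one_mul, hHinv1, mul_one]
    _ = 0 := by rw [key3, zero_mul]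
end

section
/- The intrinsic spin transforms as a vector under rotations (Lemma 11 / 'Lemma-SJ' of the paper). Fix a real number m > 0. Let W₀, W_i, P_i, J_i, ω be elements of A such that ω + m is invertible with inverse R, and suppose [W_i, J_j] = iℏ·ε_{ijk}W_k, [P_i, J_j] = iℏ·ε_{ijk}P_k, [W₀, J_j] = 0, and [ω, J_j] = 0 for all i, j. Define S_i := (1/m)·W_i − (1/m)·W₀·P_i·R. Then [S_i, J_j] = iℏ·ε_{ijk}S_k for all i, j. -/
/-- The intrinsic spin transforms as a vector under rotations
(Lemma 'Lemma-SJ'). With `ω + m` invertible with inverse `R`, and `W`, `P`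
transforming as vectors under `J` while `W₀` and `ω` are rotation invariant,
the spin `S i = (1/m) • W i - (1/m) • (W₀ * P i * R)` satisfies
`[S i, J j] = iℏ ε_{ijk} • S k`. -/
theorem intrinsic_spin_vector_under_rotations
    {A : Type*} [Ring A] [Algebra ℂ A] (ℏ : ℝ) (hℏ : ℏ ≠ 0)
    (m : ℝ) (hm : 0 < m)
    (W0 ω R : A) (W P J S : Fin 3 → A)
    (hR1 : (ω + (m : ℂ) • (1 : A)) * R = 1)
    (hR2 : R * (ω + (m : ℂ) • (1 : A)) = 1)
    (hWJ : ∀ i j, ⁅W i, J j⁆ = (Complex.I * (ℏ : ℂ)) • ∑ k, eps i j k • W k)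
    (hPJ : ∀ i j, ⁅P i, J j⁆ = (Complex.I * (ℏ : ℂ)) • ∑ k, eps i j k • P k)
    (hW0J : ∀ j, ⁅W0, J j⁆ = 0)
    (hωJ : ∀ j, ⁅ω, J j⁆ = 0)
    (hS : ∀ i, S i = ((m : ℂ))⁻¹ • W i - ((m : ℂ))⁻¹ • (W0 * P i * R)) :
    ∀ i j, ⁅S i, J j⁆ = (Complex.I * (ℏ : ℂ)) • ∑ k, eps i j k • S k := by
  intro i j
  have hω : ω * J j = J j * ω := by
    have h := hωJ j
    rwa [Ring.lie_def, sub_eq_zero] at h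
  have hW0 : W0 * J j = J j * W0 := by
    have h := hW0J j
    rwa [Ring.lie_def, sub_eq_zero] at h
  have hD : (ω + (m : ℂ) • (1 : A)) * J j = J j * (ω + (m : ℂ) • (1 : A)) := by
    rw [add_mul, mul_add, hω, smul_mul_assoc, mul_smul_comm, one_mul, mul_one]
  have hR : R * J j = J j * R := by
    calc R * J j = R * (J j * ((ω + (m : ℂ) • (1 : A)) * R)) := by rw [hR1, mul_one]
      _ = R * ((J j * (ω + (m : ℂ) • (1 : A))) * R) := by rw [mul_assoc (J j)]
      _ = R * (((ω + (m : ℂ) • (1 : A)) * J j) * R) := by rw [hD]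
      _ = (R * (ω + (m : ℂ) • (1 : A))) * (J j * R) := by simp only [mul_assoc]
      _ = J j * R := by rw [hR2, one_mul]
  have key : ⁅W0 * P i * R, J j⁆ = W0 * ⁅P i, J j⁆ * R := by
    simp only [Ring.lie_def]
    calc W0 * P i * R * J j - J j * (W0 * P i * R)
        = W0 * P i * (R * J j) - (J j * W0) * P i * R := by simp only [mul_assoc]
      _ = W0 * P i * (J j * R) - (W0 * J j) * P i * R := by rw [hR, hW0]
      _ = W0 * (P i * J j - J j * P i) * R := by noncomm_ring
  have hlin : ⁅S i, J j⁆ = ((m : ℂ))⁻¹ • ⁅W i, J j⁆ - ((m : ℂ))⁻¹ • ⁅W0 * P i * R, J j⁆ := by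
    rw [hS]
    simp only [Ring.lie_def, sub_mul, mul_sub, smul_mul_assoc, mul_smul_comm, smul_sub]
    abel
  rw [hlin, key, hWJ, hPJ]
  simp only [hS, Fin.sum_univ_three, mul_add, add_mul, smul_mul_assoc, mul_smul_comm]
  module
end

section
/- Position and spin commute (Lemma 13 / 'Lemma-SX' of the paper). Fix a real number t. Let H be invertible in A with inverse H⁻¹, and let Q_i, P_i, S_i, L_i, N_i, M_i, K_i, J_i be elements of A such that: K_i = M_i + N_i and J_j = L_j + S_j for all i, j; M_i = t·P_i − (1/2)(Q_iH + HQ_i); [K_i, J_j] = iℏ·ε_{ijk}K_k; [M_i, L_j] = iℏ·ε_{ijk}M_k; [N_i, J_j] = iℏ·ε_{ijk}N_k; [S_j, P_i] = 0; [S_j, H] = 0; [P_i, H] = 0; and [Q_i, H] = iℏ·P_i·H⁻¹. Then [M_i, S_j] = 0 and [Q_i, S_j] = 0 for all i, j. -/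
/-- Position and spin commute (Lemma 'Lemma-SX').
With `H` invertible, `K i = M i + N i`, `J j = L j + S j`,
`M i = t • P i - (1/2)(Q i H + H Q i)`, the rotation properties
`[K i, J j] = iℏ ε_{ijk} K k`, `[M i, L j] = iℏ ε_{ijk} M k`,
`[N i, J j] = iℏ ε_{ijk} N k`, and `[S j, P i] = 0`, `[S j, H] = 0`,
`[P i, H] = 0`, `[Q i, H] = iℏ • (P i * H⁻¹)`, it follows that
`[M i, S j] = 0` and `[Q i, S j] = 0`. -/
theorem position_and_spin_commute
    {A : Type*} [Ring A] [Algebra ℂ A] (ℏ : ℝ) (hℏ : ℏ ≠ 0) (t : ℝ)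
    (H Hinv : A) (Q P S L N M K J : Fin 3 → A)
    (hHinv1 : H * Hinv = 1) (hHinv2 : Hinv * H = 1)
    (hK : ∀ i, K i = M i + N i)
    (hJ : ∀ j, J j = L j + S j)
    (hM : ∀ i, M i = (t : ℂ) • P i - (2 : ℂ)⁻¹ • (Q i * H + H * Q i))
    (hKJ : ∀ i j, ⁅K i, J j⁆ = (Complex.I * (ℏ : ℂ)) • ∑ k, eps i j k • K k)
    (hML : ∀ i j, ⁅M i, L j⁆ = (Complex.I * (ℏ : ℂ)) • ∑ k, eps i j k • M k)
    (hNJ : ∀ i j, ⁅N i, J j⁆ = (Complex.I * (ℏ : ℂ)) • ∑ k, eps i j k • N k)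
    (hSP : ∀ i j, ⁅S j, P i⁆ = 0)
    (hSH : ∀ j, ⁅S j, H⁆ = 0)
    (hPH : ∀ i, ⁅P i, H⁆ = 0)
    (hQH : ∀ i, ⁅Q i, H⁆ = (Complex.I * (ℏ : ℂ)) • (P i * Hinv)) :
    ∀ i j, ⁅M i, S j⁆ = 0 ∧ ⁅Q i, S j⁆ = 0 := by
  intro i j
  have hMS : ⁅M i, S j⁆ = 0 := by
    have h1 := hKJ i j
    have h2 := hNJ i j
    have h3 := hML i j
    have e : ⁅K i, J j⁆ = ⁅M i, L j⁆ + ⁅M i, S j⁆ + ⁅N i, J j⁆ := by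
      rw [hK, hJ]
      simp only [Ring.lie_def]
      noncomm_ring
    simp only [hK, smul_add, Finset.sum_add_distrib] at h1
    rw [← hK, e, h2, ← h3] at h1
    have h4 : ⁅M i, L j⁆ + ⁅M i, S j⁆ = ⁅M i, L j⁆ := add_right_cancel h1
    simpa using h4
  refine ⟨hMS, ?_⟩
  have cM : Commute (S j) (M i) := (commute_iff_lie_eq.mpr hMS).symm
  have cP : Commute (S j) (P i) := commute_iff_lie_eq.mpr (hSP i j)
  have cH : Commute (S j) H := commute_iff_lie_eq.mpr (hSH j)
  let u : Aˣ := ⟨H, Hinv, hHinv1, hHinv2⟩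
  have cHi : Commute (S j) Hinv := by
    have : Commute (S j) (u : A) := cH
    exact this.units_inv_right
  have e1 : H * Q i = (t : ℂ) • P i - M i
      - (2 : ℂ)⁻¹ • ((Complex.I * (ℏ : ℂ)) • (P i * Hinv)) := by
    rw [← hQH, hM, Ring.lie_def]
    module
  have cHQ : Commute (S j) (H * Q i) := by
    rw [e1]
    exact ((cP.smul_right _).sub_right cM).sub_right
      (((cP.mul_right cHi).smul_right _).smul_right _)
  have e2 : Q i = Hinv * (H * Q i) := by rw [← mul_assoc, hHinv2, one_mul]
  have cQ : Commute (S j) (Q i) := by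
    rw [e2]
    exact cHi.mul_right cHQ
  exact commute_iff_lie_eq.mp cQ.symm
end

section
/- Separate conservation of the external and internal boost operators (Lemma 9 / 'Lemma-MNH' of the paper). Fix a real number t. Let H be invertible in A with inverse H⁻¹, and let Q_i, P_i, N_i, K_i be elements of A with [P_i, H] = 0, [Q_i, H] = iℏ·P_i·H⁻¹, M_i := t·P_i − (1/2)(Q_iH + HQ_i), and K_i = M_i + N_i. If [K_i, H] = −iℏ·P_i for each i, then [M_i, H] = −iℏ·P_i (so that, accounting for the explicit time dependence ∂M_i/∂t = P_i, the operator M_i is conserved) and [N_i, H] = 0 for each i. -/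
/-- Separate conservation of the external and internal boost
operators (Lemma 'Lemma-MNH'). With `H` invertible, `[P i, H] = 0`,
`[Q i, H] = iℏ • (P i * H⁻¹)`, `M i = t • P i - (1/2)(Q i H + H Q i)` and
`K i = M i + N i`, if `[K i, H] = -iℏ • P i` then `[M i, H] = -iℏ • P i`
(so that, accounting for the explicit time dependence `∂M i/∂t = P i`,
`M i` is conserved) and `[N i, H] = 0`. -/
theorem boosts_separately_conserved
    {A : Type*} [Ring A] [Algebra ℂ A] (ℏ : ℝ) (hℏ : ℏ ≠ 0) (t : ℝ)
    (H Hinv : A) (Q P N M K : Fin 3 → A)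
    (hHinv1 : H * Hinv = 1) (hHinv2 : Hinv * H = 1)
    (hPH : ∀ i, ⁅P i, H⁆ = 0)
    (hQH : ∀ i, ⁅Q i, H⁆ = (Complex.I * (ℏ : ℂ)) • (P i * Hinv))
    (hM : ∀ i, M i = (t : ℂ) • P i - (2 : ℂ)⁻¹ • (Q i * H + H * Q i))
    (hK : ∀ i, K i = M i + N i)
    (hKH : ∀ i, ⁅K i, H⁆ = -((Complex.I * (ℏ : ℂ)) • P i)) :
    ∀ i, ⁅M i, H⁆ = -((Complex.I * (ℏ : ℂ)) • P i) ∧ ⁅N i, H⁆ = 0 := by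
  intro i
  have hP := hPH i
  have hQ := hQH i
  have hMi : ⁅M i, H⁆ = -((Complex.I * (ℏ : ℂ)) • P i) := by
    have hc : P i * H = H * P i := by
      rw [Ring.lie_def] at hP
      exact sub_eq_zero.mp hP
    have h1 : ⁅M i, H⁆ = (t : ℂ) • ⁅P i, H⁆
        - (2 : ℂ)⁻¹ • (⁅Q i, H⁆ * H + H * ⁅Q i, H⁆) := by
      rw [hM]
      simp only [Ring.lie_def, sub_mul, mul_sub, add_mul, mul_add, smul_mul_assoc,
        mul_smul_comm, smul_add, smul_sub, mul_assoc]
      abel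
    have h2 : P i * Hinv * H = P i := by rw [mul_assoc, hHinv2, mul_one]
    have h3 : H * (P i * Hinv) = P i := by
      rw [← mul_assoc, ← hc, mul_assoc, hHinv1, mul_one]
    rw [h1, hP, hQ, smul_mul_assoc, mul_smul_comm, h2, h3, smul_zero, zero_sub,
      ← two_smul ℂ, smul_smul, inv_mul_cancel₀ two_ne_zero, one_smul]
  refine ⟨hMi, ?_⟩
  have h := hKH i
  have h4 : ⁅M i + N i, H⁆ = ⁅M i, H⁆ + ⁅N i, H⁆ := by
    simp only [Ring.lie_def, add_mul, mul_add]
    abel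
  rw [hK, h4, hMi] at h
  exact add_eq_left.mp h
end

section
/- Commutator of position with the intrinsic boost operator (equation (QNextra) in Proposition 'Lemma2' of the paper). In the Foldy setup, [Q_i, N_j] = iℏ·(ε_{ijk}·Λ·S_k·R − P_i·N_j·ω⁻¹·R) for all i, j. In particular, if some S_k ≠ 0 then Q_i does not commute with every N_j. -/
/-- Commutator of position with the intrinsic boost operator
(equation (QNextra)). In the Foldy setup,
`[Q i, N j] = iℏ • (ε_{ijk} Λ S k R - P i N j ω⁻¹ R)`; in particular, if
some `S k ≠ 0` then it is not the case that every `Q i` commutes with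
every `N j`. -/
theorem position_intrinsic_boost_commutator
    {A : Type*} [Ring A] [Algebra ℂ A] (ℏ : ℝ) (hℏ : ℏ ≠ 0)
    (m t : ℝ) (hm : 0 < m)
    (Q P S : Fin 3 → A) (ω ωinv Λ R : A)
    (hQQ : ∀ i j, ⁅Q i, Q j⁆ = 0)
    (hPP : ∀ i j, ⁅P i, P j⁆ = 0)
    (hQP : ∀ i j, ⁅Q i, P j⁆ = (Complex.I * (ℏ : ℂ) * kdelta i j) • (1 : A))
    (hSS : ∀ i j, ⁅S i, S j⁆ = (Complex.I * (ℏ : ℂ)) • ∑ k, eps i j k • S k)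
    (hQS : ∀ i j, ⁅Q i, S j⁆ = 0)
    (hPS : ∀ i j, ⁅P i, S j⁆ = 0)
    (hΛΛ : Λ * Λ = 1)
    (hΛQ : ∀ i, ⁅Λ, Q i⁆ = 0)
    (hΛP : ∀ i, ⁅Λ, P i⁆ = 0)
    (hΛS : ∀ i, ⁅Λ, S i⁆ = 0)
    (hΛω : ⁅Λ, ω⁆ = 0)
    (hωinv1 : ω * ωinv = 1) (hωinv2 : ωinv * ω = 1)
    (hωP : ∀ i, ⁅ω, P i⁆ = 0)
    (hωS : ∀ i, ⁅ω, S i⁆ = 0)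
    (hω2 : ω * ω = P 0 * P 0 + P 1 * P 1 + P 2 * P 2 + ((m : ℂ) ^ 2) • (1 : A))
    (hQω : ∀ i, ⁅Q i, ω⁆ = (Complex.I * (ℏ : ℂ)) • (P i * ωinv))
    (hR1 : (ω + (m : ℂ) • (1 : A)) * R = 1)
    (hR2 : R * (ω + (m : ℂ) • (1 : A)) = 1)
    (H : A) (L J N M K : Fin 3 → A)
    (hH : H = Λ * ω)
    (hL : ∀ i, L i = ∑ j, ∑ k, eps i j k • (Q j * P k))
    (hJ : ∀ i, J i = L i + S i)
    (hN : ∀ i, N i = Λ * (∑ j, ∑ k, eps i j k • (S j * P k)) * R)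
    (hM : ∀ i, M i = (t : ℂ) • P i - (2 : ℂ)⁻¹ • (Q i * H + H * Q i))
    (hK : ∀ i, K i = M i + N i)
    :
    (∀ i j, ⁅Q i, N j⁆ = (Complex.I * (ℏ : ℂ)) •
        ((∑ k, eps i j k • (Λ * S k * R)) - P i * N j * ωinv * R)) ∧
      ((∃ k, S k ≠ 0) → ¬ ∀ i j, ⁅Q i, N j⁆ = 0) := by
  simp only [Ring.lie_def] at *
  have cPP : ∀ i j, P i * P j = P j * P i := fun i j => sub_eq_zero.1 (hPP i j)
  have cPS : ∀ i j, P i * S j = S j * P i := fun i j => sub_eq_zero.1 (hPS i j)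
  have cQS : ∀ i j, Q i * S j = S j * Q i := fun i j => sub_eq_zero.1 (hQS i j)
  have cQL : ∀ i, Q i * Λ = Λ * Q i := fun i => (sub_eq_zero.1 (hΛQ i)).symm
  have cPL : ∀ i, P i * Λ = Λ * P i := fun i => (sub_eq_zero.1 (hΛP i)).symm
  have cwP : ∀ i, ω * P i = P i * ω := fun i => sub_eq_zero.1 (hωP i)
  have cwS : ∀ i, ω * S i = S i * ω := fun i => sub_eq_zero.1 (hωS i)
  obtain ⟨D, hD⟩ : ∃ D, D = ω + (m : ℂ) • (1 : A) := ⟨_, rfl⟩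
  rw [← hD] at hR1 hR2
  have cDP : ∀ i, D * P i = P i * D := fun i => by
    rw [hD, add_mul, mul_add, cwP, smul_one_mul, mul_smul_one]
  have cDw : D * ω = ω * D := by
    rw [hD, add_mul, mul_add, smul_one_mul, mul_smul_one]
  have cRP : ∀ i, R * P i = P i * R := fun i => by
    calc R * P i = R * P i * (D * R) := by rw [hR1, mul_one]
      _ = R * (P i * D) * R := by simp only [mul_assoc]
      _ = (R * D) * P i * R := by rw [← cDP]; simp only [mul_assoc]
      _ = P i * R := by rw [hR2, one_mul]
  have hQD : ∀ i, Q i * D - D * Q i = (Complex.I * (ℏ : ℂ)) • (P i * ωinv) := fun i => by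
    rw [← hQω, hD, add_mul, mul_add, smul_one_mul, mul_smul_one]; abel
  have hQR : ∀ i, Q i * R - R * Q i = -((Complex.I * (ℏ : ℂ)) • (P i * (R * (ωinv * R)))) := fun i => by
    calc Q i * R - R * Q i = (R * D) * Q i * R - R * Q i * (D * R) := by
          rw [hR1, hR2, one_mul, mul_one]
      _ = -(R * (Q i * D - D * Q i) * R) := by noncomm_ring
      _ = _ := by
          rw [hQD, mul_smul_comm, smul_mul_assoc, ← mul_assoc R, cRP]
          simp only [mul_assoc]
  obtain ⟨X, hX⟩ : ∃ X : Fin 3 → A, ∀ j, X j = ∑ a, ∑ b, eps j a b • (S a * P b) :=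
    ⟨_, fun _ => rfl⟩
  have hNX : ∀ j, N j = Λ * X j * R := fun j => by rw [hN, hX]
  have cPX : ∀ i j, P i * X j = X j * P i := fun i j => by
    have key : ∀ a b, P i * (S a * P b) = S a * P b * P i := fun a b => by
      rw [← mul_assoc, cPS, mul_assoc, cPP, mul_assoc]
    simp only [hX, Finset.mul_sum, Finset.sum_mul, mul_smul_comm, smul_mul_assoc, key]
  have hQX : ∀ i j, Q i * X j - X j * Q i =
      (Complex.I * (ℏ : ℂ)) • ∑ k, eps i j k • S k := fun i j => by
    have key : ∀ a b, Q i * (S a * P b) - S a * P b * Q i =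
        (Complex.I * (ℏ : ℂ)) • (kdelta i b • S a) := fun a b => by
      rw [← mul_assoc, cQS, mul_assoc, mul_assoc, ← mul_sub, hQP, mul_smul_comm, mul_one, mul_smul]
    simp only [hX, Finset.mul_sum, Finset.sum_mul, mul_smul_comm, smul_mul_assoc,
      ← Finset.sum_sub_distrib, ← smul_sub, key]
    simp only [smul_comm _ (Complex.I * (ℏ : ℂ)), ← Finset.smul_sum]
    congr 1
    fin_cases i <;> fin_cases j <;> simp [Fin.sum_univ_three, eps, kdelta] <;> norm_num
  have part1 : ∀ i j, Q i * N j - N j * Q i = (Complex.I * (ℏ : ℂ)) •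
        ((∑ k, eps i j k • (Λ * S k * R)) - P i * N j * ωinv * R) := fun i j => by
    have e1 : (∑ k, eps i j k • (Λ * S k * R)) = Λ * (∑ k, eps i j k • S k) * R := by
      simp only [Finset.mul_sum, Finset.sum_mul, mul_smul_comm, smul_mul_assoc]
    have e2 : P i * N j * ωinv * R = Λ * X j * (P i * (R * (ωinv * R))) := by
      rw [hNX]
      simp only [← mul_assoc]
      rw [cPL, mul_assoc Λ (P i), cPX]
      simp only [mul_assoc]
    calc Q i * N j - N j * Q i
        = Λ * (Q i * X j - X j * Q i) * R + Λ * X j * (Q i * R - R * Q i) := by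
          have : Q i * N j = Λ * Q i * X j * R := by
            rw [hNX, ← cQL]; simp only [mul_assoc]
          rw [this, hNX]; noncomm_ring
      _ = _ := by
          rw [hQX, hQR, e1, e2, smul_sub, mul_neg, mul_smul_comm, mul_smul_comm, smul_mul_assoc,
            sub_eq_add_neg]
  refine ⟨part1, ?_⟩
  rintro ⟨k₀, hk₀⟩ hall
  apply hk₀
  have hc : (Complex.I * (ℏ : ℂ)) ≠ 0 :=
    mul_ne_zero Complex.I_ne_zero (by exact_mod_cast hℏ)
  have hE : ∀ i j, (∑ k, eps i j k • S k) * (D * ω) = P i * X j := fun i j => by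
    have h0 := part1 i j
    rw [hall, eq_comm, smul_eq_zero_iff_right hc, sub_eq_zero] at h0
    have e1 : (∑ k, eps i j k • (Λ * S k * R)) = Λ * (∑ k, eps i j k • S k) * R := by
      simp only [Finset.mul_sum, Finset.sum_mul, mul_smul_comm, smul_mul_assoc]
    have e2 : P i * N j * ωinv * R = Λ * (P i * X j * R * ωinv) * R := by
      rw [hNX]
      simp only [← mul_assoc]
      rw [cPL]
    rw [e1, e2] at h0
    have h1 := congrArg (fun x => Λ * (x * D)) h0
    simp only [mul_assoc, hR2, mul_one] at h1
    simp only [← mul_assoc, hΛΛ, one_mul] at h1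
    rw [cDw, ← mul_assoc, h1]
    simp only [mul_assoc]
    rw [← mul_assoc ωinv, hωinv2, one_mul, hR2, mul_one]
  have cDS : ∀ i, D * S i = S i * D := fun i => by
    rw [hD, add_mul, mul_add, cwS, smul_one_mul, mul_smul_one]
  obtain ⟨G, hG⟩ : ∃ G, G = S 0 * P 0 + S 1 * P 1 + S 2 * P 2 := ⟨_, rfl⟩
  obtain ⟨p, hp⟩ : ∃ p, p = P 0 * P 0 + P 1 * P 1 + P 2 * P 2 := ⟨_, rfl⟩
  have c10 := cPP 1 0
  have c20 := cPP 2 0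
  have c21 := cPP 2 1
  have c10' : ∀ x, P 1 * (P 0 * x) = P 0 * (P 1 * x) := fun x => by
    rw [← mul_assoc, c10, mul_assoc]
  have c20' : ∀ x, P 2 * (P 0 * x) = P 0 * (P 2 * x) := fun x => by
    rw [← mul_assoc, c20, mul_assoc]
  have c21' : ∀ x, P 2 * (P 1 * x) = P 1 * (P 2 * x) := fun x => by
    rw [← mul_assoc, c21, mul_assoc]
  have cPS' : ∀ i j x, P i * (S j * x) = S j * (P i * x) := fun i j x => by
    rw [← mul_assoc, cPS, mul_assoc]
  have X0 : X 0 = S 1 * P 2 - S 2 * P 1 := by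
    rw [hX]; simp [Fin.sum_univ_three, eps]; norm_num; abel
  have X1 : X 1 = S 2 * P 0 - S 0 * P 2 := by
    rw [hX]; simp [Fin.sum_univ_three, eps]; norm_num; abel
  have X2 : X 2 = S 0 * P 1 - S 1 * P 0 := by
    rw [hX]; simp [Fin.sum_univ_three, eps]; norm_num; abel
  have h12 : S 0 * (D * ω) = P 1 * X 2 := by
    rw [← hE]; simp [Fin.sum_univ_three, eps]; norm_num
  have h21 : -(S 0 * (D * ω)) = P 2 * X 1 := by
    rw [← hE]; simp [Fin.sum_univ_three, eps]; norm_num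
  have h20 : S 1 * (D * ω) = P 2 * X 0 := by
    rw [← hE]; simp [Fin.sum_univ_three, eps]; norm_num
  have h02 : -(S 1 * (D * ω)) = P 0 * X 2 := by
    rw [← hE]; simp [Fin.sum_univ_three, eps]; norm_num
  have h01 : S 2 * (D * ω) = P 0 * X 1 := by
    rw [← hE]; simp [Fin.sum_univ_three, eps]; norm_num
  have h10 : -(S 2 * (D * ω)) = P 1 * X 0 := by
    rw [← hE]; simp [Fin.sum_univ_three, eps]; norm_num
  have hS : ∀ k, S k * (D * ω) + S k * (D * ω) = S k * p - G * P k := by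
    have t0 : S 0 * (D * ω) + S 0 * (D * ω) = P 1 * X 2 - P 2 * X 1 := by
      rw [← h12, ← h21]; abel
    have t1 : S 1 * (D * ω) + S 1 * (D * ω) = P 2 * X 0 - P 0 * X 2 := by
      rw [← h20, ← h02]; abel
    have t2 : S 2 * (D * ω) + S 2 * (D * ω) = P 0 * X 1 - P 1 * X 0 := by
      rw [← h01, ← h10]; abel
    intro k
    fin_cases k
    · simp only [Fin.zero_eta, Fin.mk_one, Fin.reduceFinMk, t0, X0, X1, X2, hG, hp, mul_sub, mul_add, add_mul, mul_assoc, cPS', cPS, c10, c20, c21]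
      abel
    · simp only [Fin.zero_eta, Fin.mk_one, Fin.reduceFinMk, t1, X0, X1, X2, hG, hp, mul_sub, mul_add, add_mul, mul_assoc, cPS', cPS, c10, c20, c21]
      abel
    · simp only [Fin.zero_eta, Fin.mk_one, Fin.reduceFinMk, t2, X0, X1, X2, hG, hp, mul_sub, mul_add, add_mul, mul_assoc, cPS', cPS, c10, c20, c21]
      abel
  have canc : ∀ x : A, x * (D * ω) + x * (D * ω) = 0 → x = 0 := fun x hx => by
    have h2 : (2 : ℂ) • (x * (D * ω)) = 0 := by rw [two_smul, hx]
    have h3 : x * (D * ω) = 0 := by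
      rwa [smul_eq_zero_iff_right (two_ne_zero)] at h2
    calc x = x * (D * ω) * (ωinv * R) := by
          simp only [mul_assoc]
          rw [← mul_assoc ω, hωinv1, one_mul, hR1, mul_one]
      _ = 0 := by rw [h3, zero_mul]
  have cDwP : ∀ i, (D * ω) * P i = P i * (D * ω) := fun i => by
    rw [mul_assoc, cwP, ← mul_assoc, cDP, mul_assoc]
  have G0 : G = 0 := by
    apply canc
    have e : ∀ k, S k * P k * (D * ω) + S k * P k * (D * ω) = (S k * p - G * P k) * P k :=
      fun k => by
        rw [← hS, mul_assoc, ← cDwP]; noncomm_ring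
    calc G * (D * ω) + G * (D * ω)
        = (S 0 * P 0 * (D * ω) + S 0 * P 0 * (D * ω)) +
          (S 1 * P 1 * (D * ω) + S 1 * P 1 * (D * ω)) +
          (S 2 * P 2 * (D * ω) + S 2 * P 2 * (D * ω)) := by rw [hG]; noncomm_ring
      _ = (S 0 * p - G * P 0) * P 0 + (S 1 * p - G * P 1) * P 1 + (S 2 * p - G * P 2) * P 2 := by
          rw [e, e, e]
      _ = 0 := by
          simp only [hG, hp, mul_add, add_mul, sub_mul, mul_assoc, c10, c20, c21, c10', c20', c21']
          abel
  have hpD : p = D * ω - (m : ℂ) • D := by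
    have : p = ω * ω - ((m : ℂ) ^ 2) • (1 : A) := by rw [hω2, hp]; abel
    rw [this, hD, add_mul, smul_one_mul, smul_add, smul_smul, sq]; abel
  have hfin := hS k₀
  rw [G0, zero_mul, sub_zero, hpD, mul_sub] at hfin
  have h5 : S k₀ * (D * D) = 0 := by
    have : S k₀ * (D * D) = S k₀ * (D * ω) + S k₀ * ((m : ℂ) • D) := by
      rw [← mul_add]
      congr 1
      nth_rewrite 2 [hD]
      rw [mul_add, mul_smul_one]
    rw [this]
    have h6 := sub_eq_zero.2 hfin
    rw [← h6]; abel
  calc S k₀ = S k₀ * (D * D) * (R * R) := by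
        simp only [mul_assoc]
        rw [← mul_assoc D R, hR1, one_mul, hR1, mul_one]
    _ = 0 := by rw [h5, zero_mul]
end

section
/- Foldy verification of the Poincaré relation between boosts and the Hamiltonian (part of the direction (ii) ⇒ (i) of the paper's main theorem, following Foldy 1956). In the Foldy setup, [K_i, H] = −iℏ·P_i for each i. -/
/-- Foldy verification of the Poincaré relation between boosts
and the Hamiltonian. In the Foldy setup, `[K i, H] = -iℏ • P i`. -/
theorem foldy_boost_hamiltonian_relation
    {A : Type*} [Ring A] [Algebra ℂ A] (ℏ : ℝ) (hℏ : ℏ ≠ 0)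
    (m t : ℝ) (hm : 0 < m)
    (Q P S : Fin 3 → A) (ω ωinv Λ R : A)
    (hQQ : ∀ i j, ⁅Q i, Q j⁆ = 0)
    (hPP : ∀ i j, ⁅P i, P j⁆ = 0)
    (hQP : ∀ i j, ⁅Q i, P j⁆ = (Complex.I * (ℏ : ℂ) * kdelta i j) • (1 : A))
    (hSS : ∀ i j, ⁅S i, S j⁆ = (Complex.I * (ℏ : ℂ)) • ∑ k, eps i j k • S k)
    (hQS : ∀ i j, ⁅Q i, S j⁆ = 0)
    (hPS : ∀ i j, ⁅P i, S j⁆ = 0)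
    (hΛΛ : Λ * Λ = 1)
    (hΛQ : ∀ i, ⁅Λ, Q i⁆ = 0)
    (hΛP : ∀ i, ⁅Λ, P i⁆ = 0)
    (hΛS : ∀ i, ⁅Λ, S i⁆ = 0)
    (hΛω : ⁅Λ, ω⁆ = 0)
    (hωinv1 : ω * ωinv = 1) (hωinv2 : ωinv * ω = 1)
    (hωP : ∀ i, ⁅ω, P i⁆ = 0)
    (hωS : ∀ i, ⁅ω, S i⁆ = 0)
    (hω2 : ω * ω = P 0 * P 0 + P 1 * P 1 + P 2 * P 2 + ((m : ℂ) ^ 2) • (1 : A))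
    (hQω : ∀ i, ⁅Q i, ω⁆ = (Complex.I * (ℏ : ℂ)) • (P i * ωinv))
    (hR1 : (ω + (m : ℂ) • (1 : A)) * R = 1)
    (hR2 : R * (ω + (m : ℂ) • (1 : A)) = 1)
    (H : A) (L J N M K : Fin 3 → A)
    (hH : H = Λ * ω)
    (hL : ∀ i, L i = ∑ j, ∑ k, eps i j k • (Q j * P k))
    (hJ : ∀ i, J i = L i + S i)
    (hN : ∀ i, N i = Λ * (∑ j, ∑ k, eps i j k • (S j * P k)) * R)
    (hM : ∀ i, M i = (t : ℂ) • P i - (2 : ℂ)⁻¹ • (Q i * H + H * Q i))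
    (hK : ∀ i, K i = M i + N i)
    :
    ∀ i, ⁅K i, H⁆ = -((Complex.I * (ℏ : ℂ)) • P i) := by
  have comm : ∀ {a b : A}, ⁅a, b⁆ = 0 → Commute a b := fun {a b} h => by
    rw [Ring.lie_def] at h
    exact sub_eq_zero.mp h
  have cLω : Commute Λ ω := comm hΛω
  have cLinv : Commute Λ ωinv := by
    show Λ * ωinv = ωinv * Λ
    calc Λ * ωinv = (ωinv * ω) * (Λ * ωinv) := by rw [hωinv2, one_mul]
      _ = ωinv * (ω * Λ) * ωinv := by noncomm_ring
      _ = ωinv * (Λ * ω) * ωinv := by rw [cLω.eq]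
      _ = ωinv * Λ * (ω * ωinv) := by noncomm_ring
      _ = ωinv * Λ := by rw [hωinv1, mul_one]
  have comm_R : ∀ X : A, Commute (ω + (m : ℂ) • (1 : A)) X → Commute R X := by
    intro X hX
    show R * X = X * R
    calc R * X = R * X * ((ω + (m : ℂ) • (1 : A)) * R) := by rw [hR1, mul_one]
      _ = R * (X * (ω + (m : ℂ) • (1 : A))) * R := by simp only [mul_assoc]
      _ = R * ((ω + (m : ℂ) • (1 : A)) * X) * R := by rw [hX.eq]
      _ = (R * (ω + (m : ℂ) • (1 : A))) * X * R := by simp only [mul_assoc]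
      _ = X * R := by rw [hR2, one_mul]
  have cRH : Commute R H := by
    apply comm_R
    rw [hH]
    exact ((cLω.symm.mul_right (Commute.refl ω))).add_left
      ((Commute.one_left _).smul_left _)
  have cPH : ∀ i, Commute (P i) H := fun i => by
    rw [hH]
    exact (comm (hΛP i)).symm.mul_right (comm (hωP i)).symm
  have cSH : ∀ i, Commute (S i) H := fun i => by
    rw [hH]
    exact (comm (hΛS i)).symm.mul_right (comm (hωS i)).symm
  have cLH : Commute Λ H := by
    rw [hH]
    exact (Commute.refl Λ).mul_right cLω
  have cNH : ∀ i, Commute (N i) H := fun i => by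
    rw [hN]
    refine (cLH.mul_left ?_).mul_left cRH
    refine Commute.sum_left _ _ _ fun j _ => Commute.sum_left _ _ _ fun k _ => ?_
    exact ((cSH j).mul_left (cPH k)).smul_left _
  intro i
  have hQH : Q i * H - H * Q i = (Complex.I * (ℏ : ℂ)) • (Λ * P i * ωinv) := by
    have h := hQω i
    rw [Ring.lie_def] at h
    calc Q i * H - H * Q i = (Q i * Λ) * ω - Λ * ω * Q i := by rw [hH]; simp only [mul_assoc]
      _ = (Λ * Q i) * ω - Λ * ω * Q i := by rw [(comm (hΛQ i)).eq]
      _ = Λ * (Q i * ω - ω * Q i) := by noncomm_ring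
      _ = _ := by rw [h, mul_smul_comm, mul_assoc]
  have hDH : (Λ * P i * ωinv) * H = P i := by
    calc (Λ * P i * ωinv) * H = Λ * P i * (ωinv * Λ) * ω := by rw [hH]; simp only [mul_assoc]
      _ = (Λ * P i) * Λ * (ωinv * ω) := by rw [← cLinv.eq]; simp only [mul_assoc]
      _ = P i * (Λ * Λ) := by rw [hωinv2, (comm (hΛP i)).eq, mul_one, mul_assoc]
      _ = P i := by rw [hΛΛ, mul_one]
  have cinvH : Commute ωinv H := by
    rw [hH]
    exact cLinv.symm.mul_right (show ωinv * ω = ω * ωinv by rw [hωinv1, hωinv2])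
  have hHD : H * (Λ * P i * ωinv) = P i := by
    rw [← ((cLH.mul_left (cPH i)).mul_left cinvH).eq, hDH]
  have key : (Q i * H + H * Q i) * H - H * (Q i * H + H * Q i)
      = (2 : ℂ) • ((Complex.I * (ℏ : ℂ)) • P i) := by
    calc _ = (Q i * H - H * Q i) * H + H * (Q i * H - H * Q i) := by noncomm_ring
      _ = _ := by rw [hQH, smul_mul_assoc, mul_smul_comm, hDH, hHD, two_smul]
  calc ⁅K i, H⁆ = (t : ℂ) • (P i * H - H * P i)
        - (2 : ℂ)⁻¹ • ((Q i * H + H * Q i) * H - H * (Q i * H + H * Q i))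
        + (N i * H - H * N i) := by
        rw [Ring.lie_def, hK, hM]
        simp only [add_mul, mul_add, sub_mul, mul_sub, smul_mul_assoc, mul_smul_comm,
          smul_sub, smul_add]
        abel
    _ = _ := by
        rw [key, (cPH i).eq, (cNH i).eq, smul_smul, inv_mul_cancel₀ two_ne_zero]
        simp
end

section
/- Foldy verification of the Poincaré relation between boosts and momenta (part of the direction (ii) ⇒ (i) of the paper's main theorem, following Foldy 1956). In the Foldy setup, [K_i, P_j] = −iℏ·δ_{ij}·H for all i, j. -/
/-- Foldy verification of the Poincaré relation between boosts
and momenta. In the Foldy setup, `[K i, P j] = -iℏ δ_{ij} • H`. -/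
theorem foldy_boost_momentum_relation
    {A : Type*} [Ring A] [Algebra ℂ A] (ℏ : ℝ) (hℏ : ℏ ≠ 0)
    (m t : ℝ) (hm : 0 < m)
    (Q P S : Fin 3 → A) (ω ωinv Λ R : A)
    (hQQ : ∀ i j, ⁅Q i, Q j⁆ = 0)
    (hPP : ∀ i j, ⁅P i, P j⁆ = 0)
    (hQP : ∀ i j, ⁅Q i, P j⁆ = (Complex.I * (ℏ : ℂ) * kdelta i j) • (1 : A))
    (hSS : ∀ i j, ⁅S i, S j⁆ = (Complex.I * (ℏ : ℂ)) • ∑ k, eps i j k • S k)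
    (hQS : ∀ i j, ⁅Q i, S j⁆ = 0)
    (hPS : ∀ i j, ⁅P i, S j⁆ = 0)
    (hΛΛ : Λ * Λ = 1)
    (hΛQ : ∀ i, ⁅Λ, Q i⁆ = 0)
    (hΛP : ∀ i, ⁅Λ, P i⁆ = 0)
    (hΛS : ∀ i, ⁅Λ, S i⁆ = 0)
    (hΛω : ⁅Λ, ω⁆ = 0)
    (hωinv1 : ω * ωinv = 1) (hωinv2 : ωinv * ω = 1)
    (hωP : ∀ i, ⁅ω, P i⁆ = 0)
    (hωS : ∀ i, ⁅ω, S i⁆ = 0)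
    (hω2 : ω * ω = P 0 * P 0 + P 1 * P 1 + P 2 * P 2 + ((m : ℂ) ^ 2) • (1 : A))
    (hQω : ∀ i, ⁅Q i, ω⁆ = (Complex.I * (ℏ : ℂ)) • (P i * ωinv))
    (hR1 : (ω + (m : ℂ) • (1 : A)) * R = 1)
    (hR2 : R * (ω + (m : ℂ) • (1 : A)) = 1)
    (H : A) (L J N M K : Fin 3 → A)
    (hH : H = Λ * ω)
    (hL : ∀ i, L i = ∑ j, ∑ k, eps i j k • (Q j * P k))
    (hJ : ∀ i, J i = L i + S i)
    (hN : ∀ i, N i = Λ * (∑ j, ∑ k, eps i j k • (S j * P k)) * R)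
    (hM : ∀ i, M i = (t : ℂ) • P i - (2 : ℂ)⁻¹ • (Q i * H + H * Q i))
    (hK : ∀ i, K i = M i + N i)
    :
    ∀ i j, ⁅K i, P j⁆ = -((Complex.I * (ℏ : ℂ) * kdelta i j) • H) := by
  intro i j
  have comm : ∀ {a b : A}, ⁅a, b⁆ = 0 → Commute a b := fun {a b} h =>
    sub_eq_zero.mp (by rw [← Ring.lie_def]; exact h)
  -- everything except `Q` commutes with `P j`
  have hΛ : Commute Λ (P j) := comm (hΛP j)
  have hω : Commute ω (P j) := comm (hωP j)
  have hHP : Commute H (P j) := by rw [hH]; exact hΛ.mul_left hω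
  have hRP : Commute R (P j) := by
    have h : (ω + (m : ℂ) • (1 : A)) * P j = P j * (ω + (m : ℂ) • (1 : A)) :=
      (hω.add_left ((Commute.one_left (P j)).smul_left (m : ℂ))).eq
    show R * P j = P j * R
    calc R * P j = R * (P j * ((ω + (m : ℂ) • (1 : A)) * R)) := by rw [hR1, mul_one]
      _ = R * ((ω + (m : ℂ) • (1 : A)) * P j) * R := by rw [h]; simp only [mul_assoc]
      _ = P j * R := by rw [← mul_assoc R, hR2, one_mul]
  have hNP : Commute (N i) (P j) := by
    rw [hN]
    refine (hΛ.mul_left ?_).mul_left hRP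
    refine Commute.sum_left _ _ _ fun a _ => Commute.sum_left _ _ _ fun b _ => ?_
    exact ((comm (hPS j a)).symm.mul_left (comm (hPP b j))).smul_left _
  have hQ : Q i * P j = P j * Q i + (Complex.I * (ℏ : ℂ) * kdelta i j) • (1 : A) := by
    rw [← hQP i j, Ring.lie_def]; abel
  have hPj : P i * P j = P j * P i := (comm (hPP i j)).eq
  generalize Complex.I * (ℏ : ℂ) * kdelta i j = c at hQ ⊢
  have e1 : Q i * H * P j = P j * (Q i * H) + c • H := by
    rw [mul_assoc, hHP.eq, ← mul_assoc, hQ, add_mul, smul_mul_assoc, one_mul, mul_assoc]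
  have e2 : H * Q i * P j = P j * (H * Q i) + c • H := by
    rw [mul_assoc, hQ, mul_add, ← mul_assoc, hHP.eq, mul_smul_comm, mul_one, mul_assoc]
  rw [Ring.lie_def, hK, hM, add_mul, mul_add, hNP.eq, sub_mul, mul_sub, smul_mul_assoc,
    smul_mul_assoc, mul_smul_comm, mul_smul_comm, hPj, add_mul, e1, e2, mul_add]
  module
end

section
/- Foldy verification of the conservation of orbital, spin, and total angular momentum (part of the direction (ii) ⇒ (i) of the paper's main theorem, following Foldy 1956). In the Foldy setup, [L_i, H] = 0, [S_i, H] = 0, and therefore [J_i, H] = 0 for each i. -/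
/-- Foldy verification of the conservation of orbital, spin,
and total angular momentum. In the Foldy setup, `[L i, H] = 0`,
`[S i, H] = 0`, and therefore `[J i, H] = 0`. -/
theorem foldy_angular_momentum_conserved
    {A : Type*} [Ring A] [Algebra ℂ A] (ℏ : ℝ) (hℏ : ℏ ≠ 0)
    (m t : ℝ) (hm : 0 < m)
    (Q P S : Fin 3 → A) (ω ωinv Λ R : A)
    (hQQ : ∀ i j, ⁅Q i, Q j⁆ = 0)
    (hPP : ∀ i j, ⁅P i, P j⁆ = 0)
    (hQP : ∀ i j, ⁅Q i, P j⁆ = (Complex.I * (ℏ : ℂ) * kdelta i j) • (1 : A))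
    (hSS : ∀ i j, ⁅S i, S j⁆ = (Complex.I * (ℏ : ℂ)) • ∑ k, eps i j k • S k)
    (hQS : ∀ i j, ⁅Q i, S j⁆ = 0)
    (hPS : ∀ i j, ⁅P i, S j⁆ = 0)
    (hΛΛ : Λ * Λ = 1)
    (hΛQ : ∀ i, ⁅Λ, Q i⁆ = 0)
    (hΛP : ∀ i, ⁅Λ, P i⁆ = 0)
    (hΛS : ∀ i, ⁅Λ, S i⁆ = 0)
    (hΛω : ⁅Λ, ω⁆ = 0)
    (hωinv1 : ω * ωinv = 1) (hωinv2 : ωinv * ω = 1)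
    (hωP : ∀ i, ⁅ω, P i⁆ = 0)
    (hωS : ∀ i, ⁅ω, S i⁆ = 0)
    (hω2 : ω * ω = P 0 * P 0 + P 1 * P 1 + P 2 * P 2 + ((m : ℂ) ^ 2) • (1 : A))
    (hQω : ∀ i, ⁅Q i, ω⁆ = (Complex.I * (ℏ : ℂ)) • (P i * ωinv))
    (hR1 : (ω + (m : ℂ) • (1 : A)) * R = 1)
    (hR2 : R * (ω + (m : ℂ) • (1 : A)) = 1)
    (H : A) (L J N M K : Fin 3 → A)
    (hH : H = Λ * ω)
    (hL : ∀ i, L i = ∑ j, ∑ k, eps i j k • (Q j * P k))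
    (hJ : ∀ i, J i = L i + S i)
    (hN : ∀ i, N i = Λ * (∑ j, ∑ k, eps i j k • (S j * P k)) * R)
    (hM : ∀ i, M i = (t : ℂ) • P i - (2 : ℂ)⁻¹ • (Q i * H + H * Q i))
    (hK : ∀ i, K i = M i + N i)
    :
    ∀ i, ⁅L i, H⁆ = 0 ∧ ⁅S i, H⁆ = 0 ∧ ⁅J i, H⁆ = 0 := by
  have hPc : ∀ j k, P j * P k = P k * P j := fun j k => by
    have h := hPP j k
    rw [Ring.lie_def] at h
    exact sub_eq_zero.mp h
  have hωPc : ∀ k, ω * P k = P k * ω := fun k => by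
    have h := hωP k
    rw [Ring.lie_def] at h
    exact sub_eq_zero.mp h
  have hΛPc : ∀ k, Λ * P k = P k * Λ := fun k => by
    have h := hΛP k
    rw [Ring.lie_def] at h
    exact sub_eq_zero.mp h
  have hΛQc : ∀ k, Λ * Q k = Q k * Λ := fun k => by
    have h := hΛQ k
    rw [Ring.lie_def] at h
    exact sub_eq_zero.mp h
  have hΛSc : ∀ k, Λ * S k = S k * Λ := fun k => by
    have h := hΛS k
    rw [Ring.lie_def] at h
    exact sub_eq_zero.mp h
  have hωSc : ∀ k, ω * S k = S k * ω := fun k => by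
    have h := hωS k
    rw [Ring.lie_def] at h
    exact sub_eq_zero.mp h
  have hinvP : ∀ k, ωinv * P k = P k * ωinv := fun k => by
    calc ωinv * P k = ωinv * P k * (ω * ωinv) := by rw [hωinv1, mul_one]
      _ = ωinv * (P k * ω) * ωinv := by noncomm_ring
      _ = ωinv * (ω * P k) * ωinv := by rw [hωPc]
      _ = (ωinv * ω) * P k * ωinv := by noncomm_ring
      _ = P k * ωinv := by rw [hωinv2, one_mul]
  have key : ∀ j k, Q j * P k * H - H * (Q j * P k)
      = (Complex.I * (ℏ : ℂ)) • (Λ * (P j * P k * ωinv)) := fun j k => by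
    have hHP : P k * H = H * P k := by
      rw [hH, ← mul_assoc, ← hΛPc, mul_assoc, ← hωPc, mul_assoc]
    have hQH : Q j * H - H * Q j = Λ * ⁅Q j, ω⁆ := by
      rw [hH, Ring.lie_def, ← mul_assoc, ← hΛQc, mul_sub, mul_assoc, mul_assoc]
    calc Q j * P k * H - H * (Q j * P k)
        = Q j * (P k * H) - H * Q j * P k := by rw [mul_assoc, mul_assoc]
      _ = (Q j * H - H * Q j) * P k := by rw [hHP, sub_mul, mul_assoc (Q j)]
      _ = _ := by
        rw [hQH, hQω, mul_smul_comm, smul_mul_assoc, mul_assoc, mul_assoc (P j),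
          hinvP, mul_assoc]
  have hLH : ∀ i, ⁅L i, H⁆ = 0 := fun i => by
    have e : ⁅L i, H⁆ = ∑ j, ∑ k, eps i j k •
        ((Complex.I * (ℏ : ℂ)) • (Λ * (P j * P k * ωinv))) := by
      simp only [← key, smul_sub, Finset.sum_sub_distrib]
      rw [Ring.lie_def, hL]
      simp only [Finset.sum_mul, Finset.mul_sum, smul_mul_assoc, mul_smul_comm]
    rw [e]
    simp only [Fin.sum_univ_three]
    rw [hPc 1 0, hPc 2 0, hPc 2 1]
    fin_cases i <;> simp [eps] <;> module
  have hSH : ∀ i, ⁅S i, H⁆ = 0 := fun i => by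
    rw [Ring.lie_def, hH, ← mul_assoc, ← hΛSc, mul_assoc, mul_assoc, hωSc, sub_self]
  intro i
  refine ⟨hLH i, hSH i, ?_⟩
  have h1 := hLH i
  have h2 := hSH i
  rw [Ring.lie_def] at h1 h2 ⊢
  rw [hJ, add_mul, mul_add, add_sub_add_comm, h1, h2, add_zero]
end

section
/- Foldy verification that the boost generators transform as a vector under rotations (part of the direction (ii) ⇒ (i) of the paper's main theorem, following Foldy 1956). In the Foldy setup, [J_i, K_j] = iℏ·ε_{ijk}K_k for all i, j. -/
lemma leib {A : Type*} [Ring A] (a b c : A) : ⁅a, b * c⁆ = ⁅a, b⁆ * c + b * ⁅a, c⁆ := by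
  simp only [Ring.lie_def]; noncomm_ring

lemma leib2 {A : Type*} [Ring A] (a b c : A) : ⁅a * b, c⁆ = a * ⁅b, c⁆ + ⁅a, c⁆ * b := by
  simp only [Ring.lie_def]; noncomm_ring

lemma lieSmul {A : Type*} [Ring A] [Algebra ℂ A] (r : ℂ) (a b : A) : ⁅a, r • b⁆ = r • ⁅a, b⁆ := by
  simp only [Ring.lie_def, mul_smul_comm, smul_mul_assoc, smul_sub]

lemma smulLie {A : Type*} [Ring A] [Algebra ℂ A] (r : ℂ) (a b : A) : ⁅r • a, b⁆ = r • ⁅a, b⁆ := by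
  simp only [Ring.lie_def, mul_smul_comm, smul_mul_assoc, smul_sub]

lemma lieAdd {A : Type*} [Ring A] (a b c : A) : ⁅a, b + c⁆ = ⁅a, b⁆ + ⁅a, c⁆ := by
  simp only [Ring.lie_def]; noncomm_ring

lemma addLie {A : Type*} [Ring A] (a b c : A) : ⁅a + b, c⁆ = ⁅a, c⁆ + ⁅b, c⁆ := by
  simp only [Ring.lie_def]; noncomm_ring

lemma lieNeg {A : Type*} [Ring A] (a b : A) : ⁅a, -b⁆ = -⁅a, b⁆ := by
  simp only [Ring.lie_def]; noncomm_ring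

lemma negLie {A : Type*} [Ring A] (a b : A) : ⁅-a, b⁆ = -⁅a, b⁆ := by
  simp only [Ring.lie_def]; noncomm_ring

lemma lieZero {A : Type*} [Ring A] (a : A) : ⁅a, (0 : A)⁆ = 0 := by
  simp [Ring.lie_def]

lemma zeroLie {A : Type*} [Ring A] (a : A) : ⁅(0 : A), a⁆ = 0 := by
  simp [Ring.lie_def]

lemma lieZeroSymm {A : Type*} [Ring A] {a b : A} (h : ⁅a, b⁆ = 0) : ⁅b, a⁆ = 0 := by
  rw [Ring.lie_def] at *; rw [← neg_sub, h, neg_zero]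

/-- Commuting with a unit implies commuting with its inverse. -/
lemma lieInv {A : Type*} [Ring A] {a u v : A} (h1 : u * v = 1) (h2 : v * u = 1)
    (h : ⁅a, u⁆ = 0) : ⁅a, v⁆ = 0 := by
  rw [Ring.lie_def, sub_eq_zero] at *
  calc a * v = v * u * (a * v) := by rw [h2, one_mul]
    _ = v * (u * a) * v := by noncomm_ring
    _ = v * a * (u * v) := by rw [← h]; noncomm_ring
    _ = v * a := by rw [h1, mul_one]

lemma epsVal : eps 0 1 2 = 1 ∧ eps 1 2 0 = 1 ∧ eps 2 0 1 = 1 ∧ eps 0 2 1 = -1 ∧ eps 2 1 0 = -1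
    ∧ eps 1 0 2 = -1 := by
  refine ⟨?_, ?_, ?_, ?_, ?_, ?_⟩ <;> norm_num [eps]

lemma epsZ1 (i j : Fin 3) : eps i i j = 0 := by simp [eps]
lemma epsZ2 (i j : Fin 3) : eps i j i = 0 := by simp [eps]
lemma epsZ3 (i j : Fin 3) : eps i j j = 0 := by simp [eps]

/-- The components `V` form a vector with respect to `J`. -/
def IsVec {A : Type*} [Ring A] [Algebra ℂ A] (c : ℂ) (J V : Fin 3 → A) : Prop :=
  ∀ i j, ⁅J i, V j⁆ = c • ∑ k, eps i j k • V k

lemma IsVec.cross {A : Type*} [Ring A] [Algebra ℂ A] {c : ℂ} {J V W : Fin 3 → A}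
    (hV : IsVec c J V) (hW : IsVec c J W) :
    IsVec c J (fun i => ∑ j, ∑ k, eps i j k • (V j * W k)) := by
  obtain ⟨e1, e2, e3, e4, e5, e6⟩ := epsVal
  have hV' := hV
  have hW' := hW
  unfold IsVec at hV' hW'
  intro i j
  fin_cases i <;> fin_cases j <;>
    simp [Fin.sum_univ_three, epsZ1, epsZ2, epsZ3, e1, e2, e3, e4, e5, e6, leib, hV', hW',
      lieSmul, lieAdd, lieNeg, lieZero] <;> try module

lemma IsVec.mul_right {A : Type*} [Ring A] [Algebra ℂ A] {c : ℂ} {J V : Fin 3 → A}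
    (hV : IsVec c J V) {x : A} (hx : ∀ i, ⁅J i, x⁆ = 0) : IsVec c J (fun i => V i * x) := by
  intro i j
  simp only [leib, hx, hV i j, mul_zero, add_zero, smul_mul_assoc, Finset.sum_mul]

lemma IsVec.mul_left {A : Type*} [Ring A] [Algebra ℂ A] {c : ℂ} {J V : Fin 3 → A}
    (hV : IsVec c J V) {x : A} (hx : ∀ i, ⁅J i, x⁆ = 0) : IsVec c J (fun i => x * V i) := by
  intro i j
  simp only [leib, hx, hV i j, zero_mul, zero_add, mul_smul_comm, Finset.mul_sum]

lemma IsVec.add {A : Type*} [Ring A] [Algebra ℂ A] {c : ℂ} {J V W : Fin 3 → A}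
    (hV : IsVec c J V) (hW : IsVec c J W) : IsVec c J (fun i => V i + W i) := by
  intro i j
  simp only [lieAdd, hV i j, hW i j, smul_add, Finset.sum_add_distrib]

lemma IsVec.smul {A : Type*} [Ring A] [Algebra ℂ A] {c : ℂ} {J V : Fin 3 → A}
    (hV : IsVec c J V) (r : ℂ) : IsVec c J (fun i => r • V i) := by
  intro i j
  simp only [lieSmul, hV i j, Finset.smul_sum, smul_comm r]

/-- Foldy verification that the boost generators transform as
a vector under rotations. In the Foldy setup, `[J i, K j] = iℏ ε_{ijk} • K k`. -/
theorem foldy_boost_vector_under_rotations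
    {A : Type*} [Ring A] [Algebra ℂ A] (ℏ : ℝ) (hℏ : ℏ ≠ 0)
    (m t : ℝ) (hm : 0 < m)
    (Q P S : Fin 3 → A) (ω ωinv Λ R : A)
    (hQQ : ∀ i j, ⁅Q i, Q j⁆ = 0)
    (hPP : ∀ i j, ⁅P i, P j⁆ = 0)
    (hQP : ∀ i j, ⁅Q i, P j⁆ = (Complex.I * (ℏ : ℂ) * kdelta i j) • (1 : A))
    (hSS : ∀ i j, ⁅S i, S j⁆ = (Complex.I * (ℏ : ℂ)) • ∑ k, eps i j k • S k)
    (hQS : ∀ i j, ⁅Q i, S j⁆ = 0)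
    (hPS : ∀ i j, ⁅P i, S j⁆ = 0)
    (hΛΛ : Λ * Λ = 1)
    (hΛQ : ∀ i, ⁅Λ, Q i⁆ = 0)
    (hΛP : ∀ i, ⁅Λ, P i⁆ = 0)
    (hΛS : ∀ i, ⁅Λ, S i⁆ = 0)
    (hΛω : ⁅Λ, ω⁆ = 0)
    (hωinv1 : ω * ωinv = 1) (hωinv2 : ωinv * ω = 1)
    (hωP : ∀ i, ⁅ω, P i⁆ = 0)
    (hωS : ∀ i, ⁅ω, S i⁆ = 0)
    (hω2 : ω * ω = P 0 * P 0 + P 1 * P 1 + P 2 * P 2 + ((m : ℂ) ^ 2) • (1 : A))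
    (hQω : ∀ i, ⁅Q i, ω⁆ = (Complex.I * (ℏ : ℂ)) • (P i * ωinv))
    (hR1 : (ω + (m : ℂ) • (1 : A)) * R = 1)
    (hR2 : R * (ω + (m : ℂ) • (1 : A)) = 1)
    (H : A) (L J N M K : Fin 3 → A)
    (hH : H = Λ * ω)
    (hL : ∀ i, L i = ∑ j, ∑ k, eps i j k • (Q j * P k))
    (hJ : ∀ i, J i = L i + S i)
    (hN : ∀ i, N i = Λ * (∑ j, ∑ k, eps i j k • (S j * P k)) * R)
    (hM : ∀ i, M i = (t : ℂ) • P i - (2 : ℂ)⁻¹ • (Q i * H + H * Q i))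
    (hK : ∀ i, K i = M i + N i)
    :
    ∀ i j, ⁅J i, K j⁆ = (Complex.I * (ℏ : ℂ)) • ∑ k, eps i j k • K k := by
  obtain ⟨e1, e2, e3, e4, e5, e6⟩ := epsVal
  have hPQ : ∀ i j, ⁅P i, Q j⁆ = -((Complex.I * (ℏ : ℂ) * kdelta j i) • (1 : A)) := by
    intro i j; rw [← hQP, Ring.lie_def, Ring.lie_def, neg_sub]
  have hSQ : ∀ i j, ⁅S i, Q j⁆ = 0 := fun i j => lieZeroSymm (hQS j i)
  have hSP : ∀ i j, ⁅S i, P j⁆ = 0 := fun i j => lieZeroSymm (hPS j i)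
  have hPω : ∀ i, ⁅P i, ω⁆ = 0 := fun i => lieZeroSymm (hωP i)
  have hPinv : ∀ i, P i * ωinv = ωinv * P i := fun i =>
    sub_eq_zero.mp ((Ring.lie_def _ _).symm.trans (lieInv hωinv1 hωinv2 (hPω i)))
  have hPc : ∀ i j, P i * P j = P j * P i := fun i j =>
    sub_eq_zero.mp ((Ring.lie_def _ _).symm.trans (hPP i j))
  have vQ : IsVec (Complex.I * (ℏ : ℂ)) J Q := by
    intro i j
    fin_cases i <;> fin_cases j <;>
      simp [hJ, hL, Fin.sum_univ_three, epsZ1, epsZ2, epsZ3, e1, e2, e3, e4, e5, e6, leib2,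
        smulLie, addLie, negLie, zeroLie, hQQ, hPQ, hSQ, kdelta]
  have vP : IsVec (Complex.I * (ℏ : ℂ)) J P := by
    intro i j
    fin_cases i <;> fin_cases j <;>
      simp [hJ, hL, Fin.sum_univ_three, epsZ1, epsZ2, epsZ3, e1, e2, e3, e4, e5, e6, leib2,
        smulLie, addLie, negLie, zeroLie, hPP, hQP, hSP, kdelta]
  have vS : IsVec (Complex.I * (ℏ : ℂ)) J S := by
    intro i j
    rw [hJ, hL, addLie, hSS]
    simp [Fin.sum_univ_three, leib2, smulLie, addLie, negLie, zeroLie, hPS, hQS]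
  have cΛ : ∀ i, ⁅J i, Λ⁆ = 0 := by
    intro i
    simp [hJ, hL, Fin.sum_univ_three, leib2, smulLie, addLie, negLie, zeroLie, lieZeroSymm (hΛP _),
      lieZeroSymm (hΛQ _), lieZeroSymm (hΛS _)]
  have cω : ∀ i, ⁅J i, ω⁆ = 0 := by
    intro i
    have key : ∀ a b, P a * ωinv * P b = ωinv * (P a * P b) := by
      intro a b; rw [hPinv, mul_assoc]
    fin_cases i <;>
      simp [hJ, hL, Fin.sum_univ_three, epsZ1, epsZ2, epsZ3, e1, e2, e3, e4, e5, e6, leib2,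
        smulLie, addLie, negLie, zeroLie, hPω, hQω, lieZeroSymm (hωS _), key, hPc 1 0, hPc 2 0, hPc 2 1]
  have cR : ∀ i, ⁅J i, R⁆ = 0 := by
    intro i
    refine lieInv hR1 hR2 ?_
    rw [lieAdd, cω, lieSmul, Ring.lie_def, mul_one, one_mul, sub_self, smul_zero, add_zero]
  have cH : ∀ i, ⁅J i, H⁆ = 0 := by
    intro i
    rw [hH, leib, cΛ, cω, zero_mul, mul_zero, add_zero]
  have vK := ((vP.smul (t : ℂ)).add (((vQ.mul_right cH).add (vQ.mul_left cH)).smul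
    (-(2 : ℂ)⁻¹))).add (((vS.cross vP).mul_left cΛ).mul_right cR)
  have hKe : K = _ := funext fun i => (show K i = ((t : ℂ) • P i + (-(2 : ℂ)⁻¹) • (Q i * H + H * Q i))
      + Λ * (∑ j, ∑ k, eps i j k • (S j * P k)) * R by
    rw [hK, hM, hN, neg_smul, sub_eq_add_neg])
  rw [← hKe] at vK
  exact vK
end

section
/- Foldy verification of the Poincaré relation between the boost generators (the central computation in the direction (ii) ⇒ (i) of the paper's main theorem, following Foldy 1956). In the Foldy setup, [K_i, K_j] = −iℏ·ε_{ijk}J_k for all i, j. -/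
/-- If `x` commutes with `y`, it commutes with a two-sided inverse of `y`. -/
lemma foldy_comm_inv {A : Type*} [Ring A] {x y z : A} (h : x * y = y * x)
    (h1 : y * z = 1) (h2 : z * y = 1) : z * x = x * z := by
  calc z * x = z * x * (y * z) := by rw [h1, mul_one]
    _ = z * (x * y) * z := by noncomm_ring
    _ = (z * y) * x * z := by rw [h]; noncomm_ring
    _ = x * z := by rw [h2, one_mul]

/-- Commutator with an inverse. -/
lemma foldy_inv_deriv {A : Type*} [Ring A] {q y z d : A} (h : q * y = y * q + d)
    (h1 : y * z = 1) (h2 : z * y = 1) : q * z = z * q - z * d * z := by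
  have : d = q * y - y * q := by rw [h]; abel
  calc q * z = (z * y) * q * z := by rw [h2, one_mul]
    _ = z * q * (y * z) - z * d * z := by rw [this]; noncomm_ring
    _ = _ := by rw [h1, mul_one]

lemma foldy_assoc {A : Type*} [Ring A] {x y z : A} (h : x * y = z) (u : A) :
    x * (y * u) = z * u := by rw [← mul_assoc, h]

set_option linter.unusedSimpArgs false in
set_option maxHeartbeats 1000000 in
/-- The core computation, for the reduced boosts. -/
lemma foldy_core {A : Type*} [Ring A] [Algebra ℂ A] (c m : ℂ)
    (q1 q2 p1 p2 p3 s1 s2 s3 w v R : A)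
    (hqq : q2 * q1 = q1 * q2)
    (h21 : p2 * p1 = p1 * p2) (h31 : p3 * p1 = p1 * p3) (h32 : p3 * p2 = p2 * p3)
    (q1p1 : q1 * p1 = p1 * q1 + c • 1) (q1p2 : q1 * p2 = p2 * q1) (q1p3 : q1 * p3 = p3 * q1)
    (q2p1 : q2 * p1 = p1 * q2) (q2p2 : q2 * p2 = p2 * q2 + c • 1) (q2p3 : q2 * p3 = p3 * q2)
    (s21 : s2 * s1 = s1 * s2 - c • s3) (s31 : s3 * s1 = s1 * s3 + c • s2)
    (s32 : s3 * s2 = s2 * s3 - c • s1)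
    (q1s1 : q1 * s1 = s1 * q1) (q1s2 : q1 * s2 = s2 * q1) (q1s3 : q1 * s3 = s3 * q1)
    (q2s1 : q2 * s1 = s1 * q2) (q2s2 : q2 * s2 = s2 * q2) (q2s3 : q2 * s3 = s3 * q2)
    (s1p1 : s1 * p1 = p1 * s1) (s1p2 : s1 * p2 = p2 * s1) (s1p3 : s1 * p3 = p3 * s1)
    (s2p1 : s2 * p1 = p1 * s2) (s2p2 : s2 * p2 = p2 * s2) (s2p3 : s2 * p3 = p3 * s2)
    (s3p1 : s3 * p1 = p1 * s3) (s3p2 : s3 * p2 = p2 * s3) (s3p3 : s3 * p3 = p3 * s3)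
    (wp1 : w * p1 = p1 * w) (wp2 : w * p2 = p2 * w) (wp3 : w * p3 = p3 * w)
    (s1w : s1 * w = w * s1) (s2w : s2 * w = w * s2) (s3w : s3 * w = w * s3)
    (wv : w * v = 1) (vw : v * w = 1)
    (hw2 : w * w = p1 * p1 + p2 * p2 + p3 * p3 + (m ^ 2) • (1 : A))
    (q1w : q1 * w = w * q1 + c • (p1 * v)) (q2w : q2 * w = w * q2 + c • (p2 * v))
    (R1 : (w + m • (1 : A)) * R = 1) (R2 : R * (w + m • (1 : A)) = 1)
    (X1 X2 : A)
    (hX1 : X1 = w * q1 + (c / 2) • (p1 * v) - (s2 * p3 - s3 * p2) * R)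
    (hX2 : X2 = w * q2 + (c / 2) • (p2 * v) - (s3 * p1 - s1 * p3) * R) :
    X1 * X2 - X2 * X1 = -(c • (q1 * p2 - q2 * p1 + s3)) := by
  have vp1 := foldy_comm_inv wp1.symm wv vw
  have vp2 := foldy_comm_inv wp2.symm wv vw
  have vp3 := foldy_comm_inv wp3.symm wv vw
  have s1v := (foldy_comm_inv s1w wv vw).symm
  have s2v := (foldy_comm_inv s2w wv vw).symm
  have s3v := (foldy_comm_inv s3w wv vw).symm
  have cR : ∀ x : A, x * w = w * x → R * x = x * R := fun x hx =>
    foldy_comm_inv (y := w + m • (1 : A))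
      (by simp only [mul_add, add_mul, hx, smul_mul_assoc, mul_smul_comm, one_mul, mul_one]) R1 R2
  have Rp1 := cR _ wp1.symm
  have Rp2 := cR _ wp2.symm
  have Rp3 := cR _ wp3.symm
  have s1R := (cR _ s1w).symm
  have s2R := (cR _ s2w).symm
  have s3R := (cR _ s3w).symm
  have Rw := cR w rfl
  have Rv := cR v (by rw [vw, wv])
  have q1v := foldy_inv_deriv q1w wv vw
  have q2v := foldy_inv_deriv q2w wv vw
  have q1R : q1 * R = R * q1 - R * (c • (p1 * v)) * R := foldy_inv_deriv
    (y := w + m • (1 : A)) (by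
      simp only [mul_add, add_mul, q1w, smul_mul_assoc, mul_smul_comm, one_mul, mul_one]
      abel) R1 R2
  have q2R : q2 * R = R * q2 - R * (c • (p2 * v)) * R := foldy_inv_deriv
    (y := w + m • (1 : A)) (by
      simp only [mul_add, add_mul, q2w, smul_mul_assoc, mul_smul_comm, one_mul, mul_one]
      abel) R1 R2
  have key : (p1 * p1 + p2 * p2 + p3 * p3) * (R * R) = 2 • (w * R) - 1 := by
    have e1 : p1 * p1 + p2 * p2 + p3 * p3 = w * w - (m ^ 2) • (1 : A) := by
      rw [hw2]; abel
    have e2 : m • R = 1 - w * R := by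
      rw [← R1, add_mul, smul_mul_assoc, one_mul]; abel
    have e3 : (m ^ 2) • (R * R) = (m • R) * (m • R) := by
      rw [smul_mul_smul_comm, pow_two]
    rw [e1, sub_mul, smul_mul_assoc, one_mul, e3, e2]
    have e4 : w * R * (w * R) = w * w * (R * R) := by
      rw [mul_assoc, ← mul_assoc R w R, Rw]; noncomm_ring
    rw [sub_mul, mul_sub, mul_sub, e4]
    noncomm_ring
  have key2 := congrArg (fun x => x * s3) key
  simp only [add_mul, sub_mul, smul_mul_assoc, one_mul, mul_assoc] at key2
  subst hX1 hX2
  simp only [mul_add, add_mul, mul_sub, sub_mul, smul_mul_assoc, mul_smul_comm, one_mul, mul_one,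
    smul_add, smul_sub, mul_assoc, smul_smul, hqq, h21, h31, h32, q1p1, q1p2, q1p3, q2p1, q2p2, q2p3, s21, s31, s32, q1s1, q1s2, q1s3, q2s1,
    q2s2, q2s3, s1p1, s1p2, s1p3, s2p1, s2p2, s2p3, s3p1, s3p2, s3p3, wp1, wp2, wp3, s1w, s2w,
    s3w, wv, vw, q1w, q2w, vp1, vp2, vp3, s1v, s2v, s3v, Rp1, Rp2, Rp3, s1R, s2R, s3R, Rw, Rv,
    q1v, q2v, q1R, q2R,     foldy_assoc hqq, foldy_assoc h21, foldy_assoc h31, foldy_assoc h32,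
    foldy_assoc q1p1, foldy_assoc q1p2, foldy_assoc q1p3, foldy_assoc q2p1, foldy_assoc q2p2,
    foldy_assoc q2p3, foldy_assoc s21, foldy_assoc s31, foldy_assoc s32, foldy_assoc q1s1,
    foldy_assoc q1s2, foldy_assoc q1s3, foldy_assoc q2s1, foldy_assoc q2s2, foldy_assoc q2s3,
    foldy_assoc s1p1, foldy_assoc s1p2, foldy_assoc s1p3, foldy_assoc s2p1, foldy_assoc s2p2,
    foldy_assoc s2p3, foldy_assoc s3p1, foldy_assoc s3p2, foldy_assoc s3p3, foldy_assoc wp1,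
    foldy_assoc wp2, foldy_assoc wp3, foldy_assoc s1w, foldy_assoc s2w, foldy_assoc s3w,
    foldy_assoc wv, foldy_assoc vw, foldy_assoc q1w, foldy_assoc q2w, foldy_assoc vp1,
    foldy_assoc vp2, foldy_assoc vp3, foldy_assoc s1v, foldy_assoc s2v, foldy_assoc s3v,
    foldy_assoc Rp1, foldy_assoc Rp2, foldy_assoc Rp3, foldy_assoc s1R, foldy_assoc s2R,
    foldy_assoc s3R, foldy_assoc Rw, foldy_assoc Rv, foldy_assoc q1v, foldy_assoc q2v,
    foldy_assoc q1R, foldy_assoc q2R]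
  linear_combination (norm := module) c • key2


/-- Foldy verification of the Poincaré relation between the
boost generators. In the Foldy setup, `[K i, K j] = -iℏ ε_{ijk} • J k`. -/
theorem foldy_boost_boost_relation
    {A : Type*} [Ring A] [Algebra ℂ A] (ℏ : ℝ) (hℏ : ℏ ≠ 0)
    (m t : ℝ) (hm : 0 < m)
    (Q P S : Fin 3 → A) (ω ωinv Λ R : A)
    (hQQ : ∀ i j, ⁅Q i, Q j⁆ = 0)
    (hPP : ∀ i j, ⁅P i, P j⁆ = 0)
    (hQP : ∀ i j, ⁅Q i, P j⁆ = (Complex.I * (ℏ : ℂ) * kdelta i j) • (1 : A))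
    (hSS : ∀ i j, ⁅S i, S j⁆ = (Complex.I * (ℏ : ℂ)) • ∑ k, eps i j k • S k)
    (hQS : ∀ i j, ⁅Q i, S j⁆ = 0)
    (hPS : ∀ i j, ⁅P i, S j⁆ = 0)
    (hΛΛ : Λ * Λ = 1)
    (hΛQ : ∀ i, ⁅Λ, Q i⁆ = 0)
    (hΛP : ∀ i, ⁅Λ, P i⁆ = 0)
    (hΛS : ∀ i, ⁅Λ, S i⁆ = 0)
    (hΛω : ⁅Λ, ω⁆ = 0)
    (hωinv1 : ω * ωinv = 1) (hωinv2 : ωinv * ω = 1)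
    (hωP : ∀ i, ⁅ω, P i⁆ = 0)
    (hωS : ∀ i, ⁅ω, S i⁆ = 0)
    (hω2 : ω * ω = P 0 * P 0 + P 1 * P 1 + P 2 * P 2 + ((m : ℂ) ^ 2) • (1 : A))
    (hQω : ∀ i, ⁅Q i, ω⁆ = (Complex.I * (ℏ : ℂ)) • (P i * ωinv))
    (hR1 : (ω + (m : ℂ) • (1 : A)) * R = 1)
    (hR2 : R * (ω + (m : ℂ) • (1 : A)) = 1)
    (H : A) (L J N M K : Fin 3 → A)
    (hH : H = Λ * ω)
    (hL : ∀ i, L i = ∑ j, ∑ k, eps i j k • (Q j * P k))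
    (hJ : ∀ i, J i = L i + S i)
    (hN : ∀ i, N i = Λ * (∑ j, ∑ k, eps i j k • (S j * P k)) * R)
    (hM : ∀ i, M i = (t : ℂ) • P i - (2 : ℂ)⁻¹ • (Q i * H + H * Q i))
    (hK : ∀ i, K i = M i + N i)
    :
    ∀ i j, ⁅K i, K j⁆ = -((Complex.I * (ℏ : ℂ)) • ∑ k, eps i j k • J k) := by
  
  generalize Complex.I * (ℏ : ℂ) = c at *
  simp only [Ring.lie_def, sub_eq_zero] at hQQ hPP hQS hPS hΛQ hΛP hΛS hΛω hωP hωS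
  simp only [Ring.lie_def, sub_eq_iff_eq_add'] at hQP hSS hQω
  obtain ⟨F, hF⟩ : ∃ F : Fin 3 → A, ∀ i, F i = ∑ j, ∑ k, eps i j k • (S j * P k) :=
    ⟨_, fun _ => rfl⟩
  obtain ⟨X, hX⟩ : ∃ X : Fin 3 → A, ∀ i, X i = ω * Q i + (c / 2) • (P i * ωinv) - F i * R :=
    ⟨_, fun _ => rfl⟩
  have F0 : F 0 = S 1 * P 2 - S 2 * P 1 := by
    rw [hF]; simp [Fin.sum_univ_three, eps]; module
  have F1 : F 1 = S 2 * P 0 - S 0 * P 2 := by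
    rw [hF]; simp [Fin.sum_univ_three, eps]; module
  have F2 : F 2 = S 0 * P 1 - S 1 * P 0 := by
    rw [hF]; simp [Fin.sum_univ_three, eps]; module
  have L0 : L 0 = Q 1 * P 2 - Q 2 * P 1 := by
    rw [hL]; simp [Fin.sum_univ_three, eps]; module
  have L1 : L 1 = Q 2 * P 0 - Q 0 * P 2 := by
    rw [hL]; simp [Fin.sum_univ_three, eps]; module
  have L2 : L 2 = Q 0 * P 1 - Q 1 * P 0 := by
    rw [hL]; simp [Fin.sum_univ_three, eps]; module
  have S10 : S 1 * S 0 = S 0 * S 1 - c • S 2 := by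
    rw [hSS 0 1]; simp [Fin.sum_univ_three, eps]; module
  have S20 : S 2 * S 0 = S 0 * S 2 + c • S 1 := by
    rw [hSS 0 2]; simp [Fin.sum_univ_three, eps]; module
  have S21 : S 2 * S 1 = S 1 * S 2 - c • S 0 := by
    rw [hSS 1 2]; simp [Fin.sum_univ_three, eps]; module
  have S01 : S 0 * S 1 = S 1 * S 0 + c • S 2 := by rw [S10]; abel
  have S02 : S 0 * S 2 = S 2 * S 0 - c • S 1 := by rw [S20]; abel
  have S12 : S 1 * S 2 = S 2 * S 1 + c • S 0 := by rw [S21]; abel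
  have QPd : ∀ i, Q i * P i = P i * Q i + c • 1 := fun i => by rw [hQP]; simp [kdelta]
  have QPo : ∀ i j, i ≠ j → Q i * P j = P j * Q i := fun i j h => by rw [hQP]; simp [kdelta, h]
  have X01 := foldy_core c m (Q 0) (Q 1) (P 0) (P 1) (P 2) (S 0) (S 1) (S 2) ω ωinv R
    (hQQ _ _) (hPP _ _) (hPP _ _) (hPP _ _) (QPd _) (QPo _ _ (by decide)) (QPo _ _ (by decide))
    (QPo _ _ (by decide)) (QPd _) (QPo _ _ (by decide)) S10 S20 S21
    (hQS _ _) (hQS _ _) (hQS _ _) (hQS _ _) (hQS _ _) (hQS _ _)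
    (hPS _ _).symm (hPS _ _).symm (hPS _ _).symm (hPS _ _).symm (hPS _ _).symm (hPS _ _).symm
    (hPS _ _).symm (hPS _ _).symm (hPS _ _).symm (hωP _) (hωP _) (hωP _)
    (hωS _).symm (hωS _).symm (hωS _).symm hωinv1 hωinv2 hω2 (hQω _) (hQω _) hR1 hR2
    (X 0) (X 1) (by rw [hX, F0]) (by rw [hX, F1])
  have X12 := foldy_core c m (Q 1) (Q 2) (P 1) (P 2) (P 0) (S 1) (S 2) (S 0) ω ωinv R
    (hQQ _ _) (hPP _ _) (hPP _ _) (hPP _ _) (QPd _) (QPo _ _ (by decide)) (QPo _ _ (by decide))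
    (QPo _ _ (by decide)) (QPd _) (QPo _ _ (by decide)) S21 S01 S02
    (hQS _ _) (hQS _ _) (hQS _ _) (hQS _ _) (hQS _ _) (hQS _ _)
    (hPS _ _).symm (hPS _ _).symm (hPS _ _).symm (hPS _ _).symm (hPS _ _).symm (hPS _ _).symm
    (hPS _ _).symm (hPS _ _).symm (hPS _ _).symm (hωP _) (hωP _) (hωP _)
    (hωS _).symm (hωS _).symm (hωS _).symm hωinv1 hωinv2 (by rw [hω2]; abel)
    (hQω _) (hQω _) hR1 hR2
    (X 1) (X 2) (by rw [hX, F1]) (by rw [hX, F2])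
  have X20 := foldy_core c m (Q 2) (Q 0) (P 2) (P 0) (P 1) (S 2) (S 0) (S 1) ω ωinv R
    (hQQ _ _) (hPP _ _) (hPP _ _) (hPP _ _) (QPd _) (QPo _ _ (by decide)) (QPo _ _ (by decide))
    (QPo _ _ (by decide)) (QPd _) (QPo _ _ (by decide)) S02 S12 S10
    (hQS _ _) (hQS _ _) (hQS _ _) (hQS _ _) (hQS _ _) (hQS _ _)
    (hPS _ _).symm (hPS _ _).symm (hPS _ _).symm (hPS _ _).symm (hPS _ _).symm (hPS _ _).symm
    (hPS _ _).symm (hPS _ _).symm (hPS _ _).symm (hωP _) (hωP _) (hωP _)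
    (hωS _).symm (hωS _).symm (hωS _).symm hωinv1 hωinv2 (by rw [hω2]; abel)
    (hQω _) (hQω _) hR1 hR2
    (X 2) (X 0) (by rw [hX, F2]) (by rw [hX, F0])
  -- commutation with `Λ`
  have cΛv : Commute Λ ωinv := (foldy_comm_inv hΛω hωinv1 hωinv2).symm
  have cΛR : Commute Λ R := (foldy_comm_inv (y := ω + (m : ℂ) • (1 : A))
    (by simp only [mul_add, add_mul, hΛω, smul_mul_assoc, mul_smul_comm, one_mul, mul_one])
    hR1 hR2).symm
  have cΛF : ∀ i, Commute Λ (F i) := fun i => by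
    rw [hF]
    exact Commute.sum_right _ _ _ fun j _ => Commute.sum_right _ _ _ fun k _ =>
      (Commute.mul_right (hΛS j) (hΛP k)).smul_right _
  have cΛX : ∀ i, Λ * X i = X i * Λ := fun i => by
    rw [hX]
    exact (((Commute.mul_right hΛω (hΛQ i)).add_right
      ((Commute.mul_right (hΛP i) cΛv).smul_right _)).sub_right ((cΛF i).mul_right cΛR))
  -- commutation with `P`
  have cPv : ∀ i, Commute (P i) ωinv := fun i => 
    (foldy_comm_inv (hωP i).symm hωinv1 hωinv2).symm
  have cPR : ∀ i, Commute (P i) R := fun i => (foldy_comm_inv (y := ω + (m : ℂ) • (1 : A))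
    (by simp only [mul_add, add_mul, hωP, smul_mul_assoc, mul_smul_comm, one_mul, mul_one])
    hR1 hR2).symm
  have cPF : ∀ i j, Commute (P i) (F j) := fun i j => by
    rw [hF]
    exact Commute.sum_right _ _ _ fun j _ => Commute.sum_right _ _ _ fun k _ =>
      (Commute.mul_right (hPS i j) (hPP i k)).smul_right _
  have PX : ∀ i j, P i * X j = X j * P i - (c * kdelta j i) • ω := fun i j => by
    have e1 : Commute (P i) ((c / 2) • (P j * ωinv) - F j * R) :=
      ((Commute.mul_right (hPP i j) (cPv i)).smul_right _).sub_right ((cPF i j).mul_right (cPR i))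
    have e2 := e1.eq
    have e3 : P i * (ω * Q j) = ω * Q j * P i - (c * kdelta j i) • ω := by
      rw [mul_assoc ω, hQP, ← mul_assoc, ← hωP, mul_add, mul_smul_comm, mul_one, mul_assoc]
      abel
    rw [hX, add_sub_assoc, mul_add, add_mul, e2, e3]
    abel
  have hKX : ∀ i, K i = (t : ℂ) • P i - Λ * X i := fun i => by
    have e1 : Q i * H = Λ * (ω * Q i) + c • (Λ * (P i * ωinv)) := by
      rw [hH, ← mul_assoc, ← hΛQ, mul_assoc, hQω, mul_add, mul_smul_comm]
    rw [hK, hM, hN, ← hF, hX, e1, hH, mul_sub, mul_add, mul_smul_comm]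
    simp only [mul_assoc]
    module
  have kd : ∀ i j, kdelta i j = kdelta j i := fun i j => by simp only [kdelta, eq_comm]
  have hKK : ∀ i j, ⁅K i, K j⁆ = X i * X j - X j * X i := fun i j => by
    have e1 : ∀ i j, Λ * X i * (Λ * X j) = X i * X j := fun i j => by
      rw [cΛX i, mul_assoc, ← mul_assoc Λ Λ, hΛΛ, one_mul]
    have e2 : ∀ i j, P i * (Λ * X j) = Λ * X j * P i - (c * kdelta j i) • (Λ * ω) := fun i j => by
      rw [← mul_assoc, ← hΛP, mul_assoc, PX, mul_sub, mul_smul_comm, mul_assoc]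
    rw [Ring.lie_def, hKX, hKX]
    simp only [sub_mul, mul_sub, smul_mul_assoc, mul_smul_comm, e1, e2, hPP i j, kd i j, smul_sub]
    abel
  have skew : ∀ i j, X i * X j - X j * X i = -(X j * X i - X i * X j) := fun i j => by abel
  intro i j
  rw [hKK]
  fin_cases i <;> fin_cases j <;>
    simp only [Fin.zero_eta, Fin.mk_one, Fin.reduceFinMk, Fin.isValue, sub_self]
  · simp [eps]
  · rw [X01]; simp [Fin.sum_univ_three, eps, hJ, L2]; module
  · rw [skew, X20]; simp [Fin.sum_univ_three, eps, hJ, L1]; module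
  · rw [skew, X01]; simp [Fin.sum_univ_three, eps, hJ, L2]; module
  · simp [eps]
  · rw [X12]; simp [Fin.sum_univ_three, eps, hJ, L0]; module
  · rw [X20]; simp [Fin.sum_univ_three, eps, hJ, L1]; module
  · rw [skew, X12]; simp [Fin.sum_univ_three, eps, hJ, L0]; module
  · simp [eps]
end

section
/- Form of the spatial Pauli-Lubanski vector under the spin-orbit decomposition (algebraic core of Proposition 1 / 'Lemma-N!' of the paper). Fix a real number t. Let Q_i, P_i, S_i, N_i, H be elements of A with [Q_i, P_j] = iℏ·δ_{ij}, [P_i, P_j] = 0, and [P_i, H] = 0 for all i, j. Define L_i := ε_{ijk}Q_jP_k, J_i := L_i + S_i, M_i := t·P_i − (1/2)(Q_iH + HQ_i), K_i := M_i + N_i, and the spatial Pauli-Lubanski components W_i := H·J_i − ε_{ijk}P_jK_k. If the orbital angular momentum is conserved, [L_i, H] = 0 for each i, then W_i = H·S_i − ε_{ijk}P_jN_k for each i. -/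
lemma pl_core {A : Type*} [Ring A] [Algebra ℂ A] (t : ℂ) (H q1 q2 p1 p2 : A)
    (h12 : q1 * p2 = p2 * q1) (h21 : q2 * p1 = p1 * q2) (hp : p1 * p2 = p2 * p1)
    (h1 : p1 * H = H * p1) (h2 : p2 * H = H * p2)
    (hL : (q1 * p2 - q2 * p1) * H = H * (q1 * p2 - q2 * p1)) :
    p1 * (t • p2 - (2 : ℂ)⁻¹ • (q2 * H + H * q2))
      - p2 * (t • p1 - (2 : ℂ)⁻¹ • (q1 * H + H * q1)) = H * (q1 * p2 - q2 * p1) := by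
  have e1 : p1 * (q2 * H + H * q2) = q2 * p1 * H + H * (q2 * p1) := by
    rw [mul_add, ← mul_assoc, ← mul_assoc, h1, mul_assoc H, h21]
  have e2 : p2 * (q1 * H + H * q1) = q1 * p2 * H + H * (q1 * p2) := by
    rw [mul_add, ← mul_assoc, ← mul_assoc, h2, mul_assoc H, h12]
  have e3 : q1 * p2 * H = q2 * p1 * H + H * (q1 * p2) - H * (q2 * p1) := by
    rw [sub_mul, mul_sub, sub_eq_iff_eq_add] at hL
    rw [hL]; abel
  rw [mul_sub, mul_sub, mul_smul_comm, mul_smul_comm, mul_smul_comm, mul_smul_comm, e1, e2, e3, hp,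
    mul_sub]
  module

/-- Form of the spatial Pauli-Lubanski vector under the
spin-orbit decomposition (algebraic core of Proposition 'Lemma-N!').
With the Heisenberg relations, conservation of momentum, and the definitions
`L i = ε_{ijk} Q j P k`, `J i = L i + S i`,
`M i = t • P i - (1/2)(Q i H + H Q i)`, `K i = M i + N i`,
`W i = H J i - ε_{ijk} P j K k`, if the orbital angular momentum is conserved
(`[L i, H] = 0`) then `W i = H S i - ε_{ijk} P j N k`. -/
theorem pauli_lubanski_spatial_form
    {A : Type*} [Ring A] [Algebra ℂ A] (ℏ : ℝ) (hℏ : ℏ ≠ 0) (t : ℝ)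
    (H : A) (Q P S N L J M K W : Fin 3 → A)
    (hQP : ∀ i j, ⁅Q i, P j⁆ = (Complex.I * (ℏ : ℂ) * kdelta i j) • (1 : A))
    (hPP : ∀ i j, ⁅P i, P j⁆ = 0)
    (hPH : ∀ i, ⁅P i, H⁆ = 0)
    (hL : ∀ i, L i = ∑ j, ∑ k, eps i j k • (Q j * P k))
    (hJ : ∀ i, J i = L i + S i)
    (hM : ∀ i, M i = (t : ℂ) • P i - (2 : ℂ)⁻¹ • (Q i * H + H * Q i))
    (hK : ∀ i, K i = M i + N i)
    (hW : ∀ i, W i = H * J i - ∑ j, ∑ k, eps i j k • (P j * K k))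
    (hLH : ∀ i, ⁅L i, H⁆ = 0) :
    ∀ i, W i = H * S i - ∑ j, ∑ k, eps i j k • (P j * N k) := by
  have cQP : ∀ i j, i ≠ j → Q i * P j = P j * Q i := by
    intro i j hij
    have := hQP i j
    rw [kdelta, if_neg hij, mul_zero, zero_smul, Ring.lie_def] at this
    exact sub_eq_zero.mp this
  have cPP : ∀ i j, P i * P j = P j * P i := fun i j => by
    have := hPP i j
    rw [Ring.lie_def] at this
    exact sub_eq_zero.mp this
  have cPH : ∀ i, P i * H = H * P i := fun i => by
    have := hPH i
    rw [Ring.lie_def] at this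
    exact sub_eq_zero.mp this
  have cLH : ∀ i, L i * H = H * L i := fun i => by
    have := hLH i
    rw [Ring.lie_def] at this
    exact sub_eq_zero.mp this
  have s0 : ∀ f : Fin 3 → Fin 3 → A, ∑ j, ∑ k, eps 0 j k • f j k = f 1 2 - f 2 1 := by
    intro f
    simp only [Fin.sum_univ_three, eps]
    norm_num
    abel
  have s1 : ∀ f : Fin 3 → Fin 3 → A, ∑ j, ∑ k, eps 1 j k • f j k = f 2 0 - f 0 2 := by
    intro f
    simp only [Fin.sum_univ_three, eps]
    norm_num
    abel
  have s2 : ∀ f : Fin 3 → Fin 3 → A, ∑ j, ∑ k, eps 2 j k • f j k = f 0 1 - f 1 0 := by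
    intro f
    simp only [Fin.sum_univ_three, eps]
    norm_num
    abel
  have key : ∀ a b c : Fin 3, b ≠ c →
      (∀ f : Fin 3 → Fin 3 → A, ∑ j, ∑ k, eps a j k • f j k = f b c - f c b) →
      W a = H * S a - ∑ j, ∑ k, eps a j k • (P j * N k) := by
    intro a b c hbc hs
    have eL : L a = Q b * P c - Q c * P b := by rw [hL, hs fun j k => Q j * P k]
    have h := cLH a
    rw [eL] at h
    have := pl_core (t : ℂ) H (Q b) (Q c) (P b) (P c) (cQP _ _ hbc) (cQP _ _ hbc.symm)
      (cPP _ _) (cPH _) (cPH _) h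
    rw [← hM, ← hM, ← eL] at this
    rw [hW, hs fun j k => P j * K k, hs fun j k => P j * N k, hJ, hK, hK, mul_add, ← this]
    noncomm_ring
  intro i
  fin_cases i
  · exact key 0 1 2 (by decide) s0
  · exact key 1 2 0 (by decide) s1
  · exact key 2 0 1 (by decide) s2
end
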